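/- arXiv:1709.05025 — 2 statements merged into one kernel-verified Lean document; each statement's English description precedes it below -/
import Mathlib

section
/- The subgroup Ī of GL(2,ℂ) generated by the matrices α, β, γ is a finite group isomorphic to SL(2,5) (the special linear group of 2×2 matrices over the field with 5 elements); in particular Ī has order 120. -/
noncomputable section
open Matrix

def zeta5 : ℂ := Complex.exp (2 * Real.pi * Complex.I / 5)

def alpha : Matrix (Fin 2) (Fin 2) ℂ := -(Matrix.of ![![zeta5 ^ 3, 0], ![0, zeta5 ^ 2]])
def beta : Matrix (Fin 2) (Fin 2) ℂ := Matrix.of ![![0, 1], ![-1, 0]]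
def gamma : Matrix (Fin 2) (Fin 2) ℂ :=
  (zeta5 ^ 2 - zeta5 ^ 3)⁻¹ •
    Matrix.of ![![zeta5 + zeta5⁻¹, 1], ![1, -(zeta5 + zeta5⁻¹)]]

def Ibar : Subgroup (GL (Fin 2) ℂ) :=
  Subgroup.closure {g : GL (Fin 2) ℂ |
    (g : Matrix (Fin 2) (Fin 2) ℂ) = alpha ∨ (g : Matrix (Fin 2) (Fin 2) ℂ) = beta ∨
      (g : Matrix (Fin 2) (Fin 2) ℂ) = gamma}

/-! ### A computable model of `ℤ[ζ₅]` and of the matrices over it -/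

/-- `x0 + x1 ζ + x2 ζ² + x3 ζ³` -/
structure Q4 where
  x0 : Int
  x1 : Int
  x2 : Int
  x3 : Int
  deriving DecidableEq

def Q4.add (x y : Q4) : Q4 := ⟨x.x0 + y.x0, x.x1 + y.x1, x.x2 + y.x2, x.x3 + y.x3⟩

/-- multiplication, using `ζ⁴ = -1 - ζ - ζ² - ζ³` -/
def Q4.mul (x y : Q4) : Q4 :=
  let c4 := x.x1 * y.x3 + x.x2 * y.x2 + x.x3 * y.x1
  ⟨x.x0 * y.x0 + (x.x2 * y.x3 + x.x3 * y.x2) - c4,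
   x.x0 * y.x1 + x.x1 * y.x0 + x.x3 * y.x3 - c4,
   x.x0 * y.x2 + x.x1 * y.x1 + x.x2 * y.x0 - c4,
   x.x0 * y.x3 + x.x1 * y.x2 + x.x2 * y.x1 + x.x3 * y.x0 - c4⟩

structure M4 where
  a : Q4
  b : Q4
  c : Q4
  d : Q4
  deriving DecidableEq

def M4.mul (m n : M4) : M4 :=
  ⟨(m.a.mul n.a).add (m.b.mul n.c), (m.a.mul n.b).add (m.b.mul n.d),
   (m.c.mul n.a).add (m.d.mul n.c), (m.c.mul n.b).add (m.d.mul n.d)⟩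

def M4.scal (k : Int) : M4 := ⟨⟨k, 0, 0, 0⟩, ⟨0, 0, 0, 0⟩, ⟨0, 0, 0, 0⟩, ⟨k, 0, 0, 0⟩⟩

def M4.pow (m : M4) : Nat → M4
  | 0 => M4.scal 1
  | n + 1 => m.mul (M4.pow m n)

def mA : M4 := ⟨⟨0, 0, 0, -1⟩, ⟨0, 0, 0, 0⟩, ⟨0, 0, 0, 0⟩, ⟨0, 0, -1, 0⟩⟩
def mB : M4 := ⟨⟨0, 0, 0, 0⟩, ⟨1, 0, 0, 0⟩, ⟨-1, 0, 0, 0⟩, ⟨0, 0, 0, 0⟩⟩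
/-- five times `γ` -/
def mC : M4 :=
  let l : Q4 := ⟨-1, -2, -3, 1⟩
  ⟨l.mul ⟨-1, 0, -1, -1⟩, l, l, l.mul ⟨1, 0, 1, 1⟩⟩

/-- five times the image of `!![a, b; c, d]`, through the Bruhat decomposition -/
def phi (a b c d : ZMod 5) : M4 :=
  if c = 0 then
    let j := if a = 1 ∨ a = 4 then 0 else 1
    let s := if a = 1 ∨ a = 2 then 0 else 1
    (M4.scal 5).mul ((mA.pow ((6 * (3 * b * a).val + 5 * s) % 10)).mul (mB.pow j))
  else
    let j := if c = 1 ∨ c = 4 then 0 else 1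
    let s := if c = 4 ∨ c = 2 then 0 else 1
    (mA.pow ((6 * (3 * a * c ^ 3).val + 5 * s) % 10)).mul
      ((mB.pow j).mul (mC.mul (mA.pow (6 * (3 * d * c ^ 3).val % 10))))

lemma phi_a : ∀ a b c d : ZMod 5, a * d - b * c = 1 →
    (M4.scal 5).mul (phi (-a - 2 * c) (-b - 2 * d) (-c) (-d)) =
      (phi (-1) (-2) 0 (-1)).mul (phi a b c d) := by
  decide +kernel

lemma phi_b : ∀ a b c d : ZMod 5, a * d - b * c = 1 →
    (M4.scal 5).mul (phi (2 * a) (2 * b) (3 * c) (3 * d)) =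
      (phi 2 0 0 3).mul (phi a b c d) := by
  decide +kernel

lemma phi_c : ∀ a b c d : ZMod 5, a * d - b * c = 1 →
    (M4.scal 5).mul (phi c d (-a) (-b)) =
      (phi 0 1 (-1) 0).mul (phi a b c d) := by
  decide +kernel

lemma phi_inj : ∀ a b c d : ZMod 5, a * d - b * c = 1 →
    phi a b c d = M4.scal 5 → a = 1 ∧ b = 0 ∧ c = 0 ∧ d = 1 := by
  decide +kernel

lemma phi_gen : phi (-1) (-2) 0 (-1) = (M4.scal 5).mul mA ∧ phi 2 0 0 3 = (M4.scal 5).mul mB ∧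
    phi 0 1 (-1) 0 = mC ∧ phi 1 0 0 1 = M4.scal 5 := by
  decide +kernel

/-! ### The group `SL(2,5)` -/

abbrev S5 := Matrix.SpecialLinearGroup (Fin 2) (ZMod 5)

def sA : S5 := ⟨!![-1, -2; 0, -1], by decide⟩
def sB : S5 := ⟨!![2, 0; 0, 3], by decide⟩
def sC : S5 := ⟨!![0, 1; -1, 0], by decide⟩

lemma gen5 : ∀ a b c d : ZMod 5, a * d - b * c = 1 →
    ∃ e j : Fin 2, ∃ k : Fin (4 * e.val + 1), ∃ i : Fin 10,
    (!![-1, -2; 0, -1] : Matrix (Fin 2) (Fin 2) (ZMod 5)) ^ i.val * !![2, 0; 0, 3] ^ j.val *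
      !![0, 1; -1, 0] ^ e.val * !![-1, -2; 0, -1] ^ k.val = !![a, b; c, d] := by
  decide +kernel

lemma s5_det (g : S5) : g 0 0 * g 1 1 - g 0 1 * g 1 0 = 1 := by
  rw [← Matrix.det_fin_two]; exact g.2

lemma closM : Submonoid.closure {sA, sB, sC} = (⊤ : Submonoid S5) := by
  rw [eq_top_iff]
  intro g _
  obtain ⟨e, j, k, i, h⟩ := gen5 _ _ _ _ (s5_det g)
  have hg : g = sA ^ i.val * sB ^ j.val * sC ^ e.val * sA ^ k.val := by
    apply Subtype.ext
    have h2 : (g : Matrix (Fin 2) (Fin 2) (ZMod 5)) = !![g 0 0, g 0 1; g 1 0, g 1 1] :=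
      Matrix.eta_fin_two _
    rw [h2, ← h]
    simp only [Matrix.SpecialLinearGroup.coe_mul, Matrix.SpecialLinearGroup.coe_pow]
    rfl
  have hA : sA ∈ Submonoid.closure {sA, sB, sC} := Submonoid.subset_closure (by simp)
  have hB : sB ∈ Submonoid.closure {sA, sB, sC} := Submonoid.subset_closure (by simp)
  have hC : sC ∈ Submonoid.closure {sA, sB, sC} := Submonoid.subset_closure (by simp)
  rw [hg]
  exact mul_mem (mul_mem (mul_mem (pow_mem hA _) (pow_mem hB _)) (pow_mem hC _)) (pow_mem hA _)

lemma closG : Subgroup.closure {sA, sB, sC} = (⊤ : Subgroup S5) := by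
  rw [eq_top_iff]
  intro g _
  have h : g ∈ Submonoid.closure {sA, sB, sC} := by rw [closM]; trivial
  exact ((Submonoid.closure_le (S := (Subgroup.closure {sA, sB, sC}).toSubmonoid)).2
    Subgroup.subset_closure) h

lemma card5 : Nat.card S5 = 120 := by
  rw [Nat.card_eq_fintype_card]
  decide +kernel

/-! ### Evaluation in the complex numbers -/

lemma zeta5_prim : IsPrimitiveRoot zeta5 5 := by
  have := Complex.isPrimitiveRoot_exp 5 (by norm_num)
  simpa [zeta5] using this

lemma zeta5_four : zeta5 ^ 4 = -1 - zeta5 - zeta5 ^ 2 - zeta5 ^ 3 := by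
  have h := zeta5_prim.geom_sum_eq_zero (by norm_num)
  simp only [Finset.sum_range_succ, Finset.sum_range_zero] at h
  linear_combination h

def Q4.ev (x : Q4) : ℂ := x.x0 + x.x1 * zeta5 + x.x2 * zeta5 ^ 2 + x.x3 * zeta5 ^ 3

lemma Q4.ev_add (x y : Q4) : (x.add y).ev = x.ev + y.ev := by
  simp only [Q4.ev, Q4.add]; push_cast; ring

lemma Q4.ev_mul (x y : Q4) : (x.mul y).ev = x.ev * y.ev := by
  have h := zeta5_four
  have h5 : zeta5 ^ 5 = 1 := zeta5_prim.pow_eq_one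
  have h6 : zeta5 ^ 6 = zeta5 := by linear_combination zeta5 * h5
  simp only [Q4.ev, Q4.mul]; push_cast
  linear_combination -(x.x1 * y.x3 + x.x2 * y.x2 + x.x3 * y.x1 : ℂ) * h
    - (x.x2 * y.x3 + x.x3 * y.x2 : ℂ) * h5 - (x.x3 * y.x3 : ℂ) * h6

lemma Q4.ev_eq_zero (x : Q4) (h : x.ev = 0) : x = ⟨0, 0, 0, 0⟩ := by
  let p : Polynomial ℤ := Polynomial.C x.x0 + Polynomial.C x.x1 * Polynomial.X +
    Polynomial.C x.x2 * Polynomial.X ^ 2 + Polynomial.C x.x3 * Polynomial.X ^ 3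
  have hp : Polynomial.aeval zeta5 p = 0 := by
    simpa [p, Q4.ev] using h
  have hd : Polynomial.cyclotomic 5 ℤ ∣ p := by
    rw [Polynomial.cyclotomic_eq_minpoly zeta5_prim (by norm_num)]
    exact minpoly.isIntegrallyClosed_dvd (zeta5_prim.isIntegral (by norm_num)) hp
  have hp0 : p = 0 := by
    refine Polynomial.eq_zero_of_dvd_of_natDegree_lt hd ?_
    rw [Polynomial.natDegree_cyclotomic]
    have h1 : p.natDegree ≤ 3 := by
      simp only [p]; compute_degree
    have h2 : Nat.totient 5 = 4 := by decide
    omega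
  have c0 : p.coeff 0 = x.x0 := by simp [p, Polynomial.coeff_X, Polynomial.coeff_C, -eq_intCast, -map_intCast]
  have c1 : p.coeff 1 = x.x1 := by simp [p, Polynomial.coeff_X, Polynomial.coeff_C, -eq_intCast, -map_intCast]
  have c2 : p.coeff 2 = x.x2 := by simp [p, Polynomial.coeff_X, Polynomial.coeff_C, -eq_intCast, -map_intCast]
  have c3 : p.coeff 3 = x.x3 := by simp [p, Polynomial.coeff_X, Polynomial.coeff_C, -eq_intCast, -map_intCast]
  rw [hp0, Polynomial.coeff_zero] at c0 c1 c2 c3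
  cases x
  simp_all

lemma Q4.ev_inj (x y : Q4) (h : x.ev = y.ev) : x = y := by
  have := Q4.ev_eq_zero ⟨x.x0 - y.x0, x.x1 - y.x1, x.x2 - y.x2, x.x3 - y.x3⟩ (by
    simp only [Q4.ev] at h ⊢; push_cast; linear_combination h)
  cases x; cases y
  simp only [Q4.mk.injEq] at this ⊢
  omega

def M4.ev (m : M4) : Matrix (Fin 2) (Fin 2) ℂ := !![m.a.ev, m.b.ev; m.c.ev, m.d.ev]

lemma M4.ev_mul (m n : M4) : (m.mul n).ev = m.ev * n.ev := by
  simp [M4.ev, M4.mul, Q4.ev_add, Q4.ev_mul, Matrix.mul_fin_two]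

lemma M4.ev_scal (k : ℤ) : (M4.scal k).ev = (k : ℂ) • 1 := by
  simp [M4.ev, M4.scal, Q4.ev, Matrix.one_fin_two]

lemma M4.ev_inj (m n : M4) (h : m.ev = n.ev) : m = n := by
  have h00 := congrFun (congrFun h 0) 0
  have h01 := congrFun (congrFun h 0) 1
  have h10 := congrFun (congrFun h 1) 0
  have h11 := congrFun (congrFun h 1) 1
  simp [M4.ev] at h00 h01 h10 h11
  cases m; cases n
  simp only [M4.mk.injEq]
  exact ⟨Q4.ev_inj _ _ h00, Q4.ev_inj _ _ h01, Q4.ev_inj _ _ h10, Q4.ev_inj _ _ h11⟩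

lemma ev_mA : mA.ev = alpha := by
  ext i j; fin_cases i <;> fin_cases j <;> simp [M4.ev, mA, alpha, Q4.ev]

lemma ev_mB : mB.ev = beta := by
  ext i j; fin_cases i <;> fin_cases j <;> simp [M4.ev, mB, beta, Q4.ev]

lemma ev_mC : mC.ev = (5 : ℂ) • gamma := by
  have h4 := zeta5_four
  have h5 : zeta5 ^ 5 = 1 := zeta5_prim.pow_eq_one
  have hi : zeta5⁻¹ = -1 - zeta5 - zeta5 ^ 2 - zeta5 ^ 3 := by
    rw [← h4]; exact (eq_inv_of_mul_eq_one_left (by linear_combination h5)).symm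
  have hl : (-1 - 2 * zeta5 - 3 * zeta5 ^ 2 + zeta5 ^ 3) * (zeta5 ^ 2 - zeta5 ^ 3) = 5 := by
    linear_combination -h4 + (4 - zeta5) * h5
  have hne : zeta5 ^ 2 - zeta5 ^ 3 ≠ 0 := by
    intro h; rw [h] at hl; norm_num at hl
  have hl2 : (5 : ℂ) * (zeta5 ^ 2 - zeta5 ^ 3)⁻¹ =
      -1 - 2 * zeta5 - 3 * zeta5 ^ 2 + zeta5 ^ 3 := by
    rw [← hl, mul_assoc, mul_inv_cancel₀ hne, mul_one]
  rw [gamma, smul_smul, hl2, hi]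
  ext i j
  fin_cases i <;> fin_cases j <;> simp [M4.ev, mC, Q4.ev_mul] <;> simp [Q4.ev] <;> ring

/-! ### The representation -/

def rho (g : S5) : Matrix (Fin 2) (Fin 2) ℂ :=
  (5 : ℂ)⁻¹ • (phi (g 0 0) (g 0 1) (g 1 0) (g 1 1)).ev

lemma rho_one : rho 1 = 1 := by
  have h := phi_gen.2.2.2
  simp [rho, h, M4.ev_scal, smul_smul]

lemma rho_sA : rho sA = alpha := by
  have h := phi_gen.1
  simp [rho, sA, h, M4.ev_mul, M4.ev_scal, smul_smul, ev_mA]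

lemma rho_sB : rho sB = beta := by
  have h := phi_gen.2.1
  simp [rho, sB, h, M4.ev_mul, M4.ev_scal, smul_smul, ev_mB]

lemma rho_sC : rho sC = gamma := by
  have h := phi_gen.2.2.1
  simp [rho, sC, h, smul_smul, ev_mC]

lemma scale_aux (x y z : M4) (h : (M4.scal 5).mul x = y.mul z) :
    (5 : ℂ)⁻¹ • x.ev = ((5 : ℂ)⁻¹ • y.ev) * ((5 : ℂ)⁻¹ • z.ev) := by
  have h2 := congrArg M4.ev h
  rw [M4.ev_mul, M4.ev_mul, M4.ev_scal] at h2
  rw [smul_mul_smul_comm, ← h2]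
  simp [smul_smul]

lemma rho_sA_mul (g : S5) : rho (sA * g) = rho sA * rho g := by
  have h := scale_aux _ _ _ (phi_a _ _ _ _ (s5_det g))
  rw [show rho sA = _ from rfl, show rho g = _ from rfl]
  refine Eq.trans ?_ h
  rw [rho, Matrix.SpecialLinearGroup.coe_mul,
    show (sA : Matrix (Fin 2) (Fin 2) (ZMod 5)) = !![-1, -2; 0, -1] from rfl]
  simp [Matrix.mul_apply, Fin.sum_univ_two, sub_eq_add_neg]

lemma rho_sB_mul (g : S5) : rho (sB * g) = rho sB * rho g := by
  have h := scale_aux _ _ _ (phi_b _ _ _ _ (s5_det g))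
  rw [show rho sB = _ from rfl, show rho g = _ from rfl]
  refine Eq.trans ?_ h
  rw [rho, Matrix.SpecialLinearGroup.coe_mul,
    show (sB : Matrix (Fin 2) (Fin 2) (ZMod 5)) = !![2, 0; 0, 3] from rfl]
  simp [Matrix.mul_apply, Fin.sum_univ_two, sub_eq_add_neg]

lemma rho_sC_mul (g : S5) : rho (sC * g) = rho sC * rho g := by
  have h := scale_aux _ _ _ (phi_c _ _ _ _ (s5_det g))
  rw [show rho sC = _ from rfl, show rho g = _ from rfl]
  refine Eq.trans ?_ h
  rw [rho, Matrix.SpecialLinearGroup.coe_mul,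
    show (sC : Matrix (Fin 2) (Fin 2) (ZMod 5)) = !![0, 1; -1, 0] from rfl]
  simp [Matrix.mul_apply, Fin.sum_univ_two, sub_eq_add_neg]

lemma rho_mul (x g : S5) : rho (x * g) = rho x * rho g := by
  have hx : x ∈ Submonoid.closure {sA, sB, sC} := by rw [closM]; trivial
  induction hx using Submonoid.closure_induction generalizing g with
  | mem y hy =>
    rcases hy with rfl | rfl | rfl
    · exact rho_sA_mul g
    · exact rho_sB_mul g
    · exact rho_sC_mul g
  | one => rw [rho_one, one_mul, one_mul]
  | mul y z _ _ hy hz => rw [mul_assoc, hy, hz, hy z, mul_assoc]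

def rhoHom : S5 →* Matrix (Fin 2) (Fin 2) ℂ where
  toFun := rho
  map_one' := rho_one
  map_mul' := rho_mul

def rhoGL : S5 →* GL (Fin 2) ℂ := rhoHom.toHomUnits

lemma rhoGL_coe (g : S5) : (rhoGL g : Matrix (Fin 2) (Fin 2) ℂ) = rho g := rfl

lemma rhoGL_inj : Function.Injective rhoGL := by
  rw [injective_iff_map_eq_one]
  intro g hg
  have h : rho g = 1 := by rw [← rhoGL_coe, hg]; rfl
  have h2 : (phi (g 0 0) (g 0 1) (g 1 0) (g 1 1)).ev = (M4.scal 5).ev := by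
    rw [M4.ev_scal, ← h, rho, smul_smul]; simp
  obtain ⟨h00, h01, h10, h11⟩ := phi_inj _ _ _ _ (s5_det g) (M4.ev_inj _ _ h2)
  ext i j
  fin_cases i <;> fin_cases j <;> simp [h00, h01, h10, h11]

lemma rhoGL_range : rhoGL.range = Ibar := by
  rw [MonoidHom.range_eq_map, ← closG, MonoidHom.map_closure, Ibar]
  congr 1
  ext g
  simp only [Set.image_insert_eq, Set.image_singleton, Set.mem_insert_iff,
    Set.mem_singleton_iff, Set.mem_ofPred_eq, ← rho_sA, ← rho_sB, ← rho_sC, ← rhoGL_coe,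
    Units.val_inj]

theorem stmt0 :
    Finite Ibar ∧
    Nonempty (Ibar ≃* Matrix.SpecialLinearGroup (Fin 2) (ZMod 5)) ∧
    Nat.card Ibar = 120 := by
  have e : S5 ≃* Ibar :=
    (MonoidHom.ofInjective rhoGL_inj).trans (MulEquiv.subgroupCongr rhoGL_range)
  exact ⟨Finite.of_equiv _ e.toEquiv, ⟨e.symm⟩, by rw [← Nat.card_congr e.toEquiv, card5]⟩
end
end

section
/- The linear automorphism group Lin(Z³⁰ + F₃₀(X,Y)) ⊆ PGL(3,ℂ) of the smooth plane curve C₃₀ : Z³⁰ + F₃₀(X,Y) = 0 has order 1800 = 60·30 and is isomorphic to the direct product ℤ/15 × SL(2,5). -/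
noncomputable section
open Matrix MvPolynomial

/-- The subgroup of nonzero scalar matrices in `GL(3, ℂ)`. -/
def scalarSub : Subgroup (GL (Fin 3) ℂ) :=
  (Units.map (algebraMap ℂ (Matrix (Fin 3) (Fin 3) ℂ)).toMonoidHom).range

instance : scalarSub.Normal := by
  constructor
  rintro n ⟨c, rfl⟩ g
  refine ⟨c, ?_⟩
  ext
  simp only [Units.coe_map, RingHom.toMonoidHom_eq_coe, MonoidHom.coe_coe, Units.val_mul]
  rw [← Algebra.commutes (↑c : ℂ) (↑g : Matrix (Fin 3) (Fin 3) ℂ), mul_assoc,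
    ← Units.val_mul, mul_inv_cancel, Units.val_one, mul_one]

/-- `PGL(3, ℂ)`: the quotient of `GL(3, ℂ)` by the nonzero scalar matrices. -/
abbrev PGL3 := GL (Fin 3) ℂ ⧸ scalarSub

/-- `g` maps the zero set of `F` in `ℂ³` onto itself. -/
def Preserves (F : MvPolynomial (Fin 3) ℂ) (g : GL (Fin 3) ℂ) : Prop :=
  (fun v => (g : Matrix (Fin 3) (Fin 3) ℂ).mulVec v) '' {v : Fin 3 → ℂ | eval v F = 0}
    = {v : Fin 3 → ℂ | eval v F = 0}

/-- The subgroup of `GL(3, ℂ)` of matrices mapping the zero set of `F` onto itself. -/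
def LinGL (F : MvPolynomial (Fin 3) ℂ) : Subgroup (GL (Fin 3) ℂ) where
  carrier := {g | Preserves F g}
  one_mem' := by
    show Preserves F 1
    unfold Preserves
    simp [Matrix.one_mulVec]
  mul_mem' := by
    intro a b ha hb
    show Preserves F (a * b)
    unfold Preserves at *
    have h : (fun v => ((a * b : GL (Fin 3) ℂ) : Matrix (Fin 3) (Fin 3) ℂ).mulVec v)
        = (fun v => (a : Matrix (Fin 3) (Fin 3) ℂ).mulVec v) ∘
          (fun v => (b : Matrix (Fin 3) (Fin 3) ℂ).mulVec v) := by
      funext v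
      simp [Matrix.mulVec_mulVec]
    rw [h, Set.image_comp, hb, ha]
  inv_mem' := by
    intro a ha
    show Preserves F a⁻¹
    unfold Preserves at *
    conv_lhs => rw [← ha, ← Set.image_comp]
    have h : ((fun v => ((a⁻¹ : GL (Fin 3) ℂ) : Matrix (Fin 3) (Fin 3) ℂ).mulVec v) ∘
        (fun v => (a : Matrix (Fin 3) (Fin 3) ℂ).mulVec v)) = id := by
      funext v
      rw [Function.comp_apply, Matrix.mulVec_mulVec, ← Units.val_mul, inv_mul_cancel,
        Units.val_one, Matrix.one_mulVec, id_eq]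
    rw [h, Set.image_id]

/-- The linear automorphism group `Lin(F) ⊆ PGL(3, ℂ)`:
classes of matrices mapping the zero set of `F` onto itself. -/
def Lin (F : MvPolynomial (Fin 3) ℂ) : Subgroup PGL3 :=
  (LinGL F).map (QuotientGroup.mk' scalarSub)

/-- `G = Z³⁰ + F₃₀(X, Y)` with `X = X 0`, `Y = X 1`, `Z = X 2`. -/
def G30 : MvPolynomial (Fin 3) ℂ :=
  X 2 ^ 30 +
    (X 0 ^ 30 + 522 * (X 0 ^ 25 * X 1 ^ 5 - X 0 ^ 5 * X 1 ^ 25)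
      - 10005 * (X 0 ^ 20 * X 1 ^ 10 + X 0 ^ 10 * X 1 ^ 20) + X 1 ^ 30)


/-- The binary form `F₃₀` as a function. -/
def Ff (x y : ℂ) : ℂ :=
  x ^ 30 + 522 * (x ^ 25 * y ^ 5 - x ^ 5 * y ^ 25)
      - 10005 * (x ^ 20 * y ^ 10 + x ^ 10 * y ^ 20) + y ^ 30

theorem Ff_smul (c x y : ℂ) : Ff (c * x) (c * y) = c ^ 30 * Ff x y := by
  unfold Ff; ring

theorem ht0 (e x y : ℂ) (he : e^4+e^3+e^2+e+1 = 0) :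
    ((-(e-e^4)*x+(e^2-e^3)*y)^6 + 2*(-(e-e^4)*x+(e^2-e^3)*y)^5*((e^2-e^3)*x+(e-e^4)*y) - 5*(-(e-e^4)*x+(e^2-e^3)*y)^4*((e^2-e^3)*x+(e-e^4)*y)^2 - 5*(-(e-e^4)*x+(e^2-e^3)*y)^2*((e^2-e^3)*x+(e-e^4)*y)^4 - 2*(-(e-e^4)*x+(e^2-e^3)*y)*((e^2-e^3)*x+(e-e^4)*y)^5 + ((e^2-e^3)*x+(e-e^4)*y)^6)
    = 125 * (x^6 + 2*x^5*y - 5*x^4*y^2 - 5*x^2*y^4 - 2*x*y^5 + y^6) := by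
  linear_combination (((1)*e^20 + (-3)*e^19 + (-1)*e^18 + (7)*e^17 + (-4)*e^16 + (33)*e^15 + (-99)*e^14 + (107)*e^13 + (-99)*e^12 + (158)*e^11 + (-129)*e^10 + (7)*e^9 + (-1)*e^8 + (-3)*e^7 + (126)*e^6 + (-125)*e^5 + (125)*e + (-125))*x^0*y^6 +
    ((2)*e^20 + (14)*e^19 + (-42)*e^18 + (34)*e^17 + (-108)*e^16 + (246)*e^15 + (-158)*e^14 + (74)*e^13 + (-158)*e^12 + (-4)*e^11 + (142)*e^10 + (34)*e^9 + (-42)*e^8 + (14)*e^7 + (-248)*e^6 + (250)*e^5 + (-250)*e + (250))*x^1*y^5 +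
    ((-5)*e^20 + (15)*e^19 + (5)*e^18 + (-35)*e^17 + (20)*e^16 + (-165)*e^15 + (495)*e^14 + (-535)*e^13 + (495)*e^12 + (-790)*e^11 + (645)*e^10 + (-35)*e^9 + (5)*e^8 + (15)*e^7 + (-630)*e^6 + (625)*e^5 + (-625)*e + (625))*x^2*y^4 +
    ((-5)*e^20 + (15)*e^19 + (5)*e^18 + (-35)*e^17 + (20)*e^16 + (-165)*e^15 + (495)*e^14 + (-535)*e^13 + (495)*e^12 + (-790)*e^11 + (645)*e^10 + (-35)*e^9 + (5)*e^8 + (15)*e^7 + (-630)*e^6 + (625)*e^5 + (-625)*e + (625))*x^4*y^2 +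
    ((-2)*e^20 + (-14)*e^19 + (42)*e^18 + (-34)*e^17 + (108)*e^16 + (-246)*e^15 + (158)*e^14 + (-74)*e^13 + (158)*e^12 + (4)*e^11 + (-142)*e^10 + (-34)*e^9 + (42)*e^8 + (-14)*e^7 + (248)*e^6 + (-250)*e^5 + (250)*e + (-250))*x^5*y^1 +
    ((1)*e^20 + (-3)*e^19 + (-1)*e^18 + (7)*e^17 + (-4)*e^16 + (33)*e^15 + (-99)*e^14 + (107)*e^13 + (-99)*e^12 + (158)*e^11 + (-129)*e^10 + (7)*e^9 + (-1)*e^8 + (-3)*e^7 + (126)*e^6 + (-125)*e^5 + (125)*e + (-125))*x^6*y^0) * he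

theorem ht1 (e x y : ℂ) (he : e^4+e^3+e^2+e+1 = 0) :
    (e^3*(-(e-e^4)*x+(e^2-e^3)*y)^6 + 2*e^2*(-(e-e^4)*x+(e^2-e^3)*y)^5*((e^2-e^3)*x+(e-e^4)*y) - 5*e^1*(-(e-e^4)*x+(e^2-e^3)*y)^4*((e^2-e^3)*x+(e-e^4)*y)^2 - 5*e^4*(-(e-e^4)*x+(e^2-e^3)*y)^2*((e^2-e^3)*x+(e-e^4)*y)^4 - 2*e^3*(-(e-e^4)*x+(e^2-e^3)*y)*((e^2-e^3)*x+(e-e^4)*y)^5 + e^2*((e^2-e^3)*x+(e-e^4)*y)^6)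
    = 125 * (e^1*x^6 + 2*e^4*x^5*y - 5*e^2*x^4*y^2 - 5*e^3*x^2*y^4 - 2*e^1*x*y^5 + e^4*y^6) := by
  linear_combination (((-6)*e^22 + (18)*e^21 + (-17)*e^20 + (29)*e^19 + (-74)*e^18 + (62)*e^17 + (-31)*e^16 + (99)*e^15 + (-98)*e^14 + (-22)*e^13 + (24)*e^12 + (-7)*e^11 + (123)*e^10 + (-126)*e^9 + (1)*e^8 + (125)*e^5 + (-125)*e^4)*x^0*y^6 +
    ((12)*e^23 + (-22)*e^22 + (-14)*e^21 + (36)*e^20 + (-32)*e^19 + (126)*e^18 + (-206)*e^17 + (128)*e^16 + (-52)*e^15 + (64)*e^14 + (2)*e^13 + (-182)*e^12 + (176)*e^11 + (6)*e^10 + (8)*e^9 + (-250)*e^7 + (250)*e^6 + (-250)*e^2 + (250)*e)*x^1*y^5 +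
    ((-5)*e^24 + (5)*e^23 + (50)*e^22 + (-110)*e^21 + (65)*e^20 + (-65)*e^19 + (70)*e^18 + (230)*e^17 + (-450)*e^16 + (425)*e^15 + (-675)*e^14 + (650)*e^13 + (-55)*e^12 + (-90)*e^11 + (110)*e^10 + (-655)*e^9 + (625)*e^8 + (-625)*e^4 + (625)*e^3)*x^2*y^4 +
    ((-20)*e^23 + (40)*e^22 + (60)*e^21 + (-220)*e^20 + (300)*e^19 + (-500)*e^18 + (760)*e^17 + (-780)*e^16 + (780)*e^15 + (-760)*e^14 + (500)*e^13 + (-300)*e^12 + (220)*e^11 + (-60)*e^10 + (-40)*e^9 + (20)*e^8)*x^3*y^3 +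
    ((-30)*e^22 + (110)*e^21 + (-90)*e^20 + (-55)*e^19 + (25)*e^18 + (-50)*e^17 + (425)*e^16 + (-450)*e^15 + (230)*e^14 + (-555)*e^13 + (560)*e^12 + (65)*e^11 + (-110)*e^10 + (50)*e^9 + (-620)*e^8 + (620)*e^7 + (-625)*e^3 + (625)*e^2)*x^4*y^2 +
    ((-8)*e^22 + (-6)*e^21 + (74)*e^20 + (-68)*e^19 + (-2)*e^18 + (-64)*e^17 + (52)*e^16 + (122)*e^15 + (-44)*e^14 + (-126)*e^13 + (32)*e^12 + (-36)*e^11 + (264)*e^10 + (-228)*e^9 + (-12)*e^8 + (250)*e^5 + (-250)*e^4)*x^5*y^1 +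
    ((1)*e^23 + (-1)*e^22 + (-2)*e^21 + (-7)*e^20 + (24)*e^19 + (-22)*e^18 + (27)*e^17 + (-26)*e^16 + (-31)*e^15 + (62)*e^14 + (-74)*e^13 + (154)*e^12 + (-142)*e^11 + (18)*e^10 + (-6)*e^9 + (125)*e^7 + (-125)*e^6 + (125)*e^2 + (-125)*e)*x^6*y^0) * he

theorem ht2 (e x y : ℂ) (he : e^4+e^3+e^2+e+1 = 0) :
    (e^1*(-(e-e^4)*x+(e^2-e^3)*y)^6 + 2*e^4*(-(e-e^4)*x+(e^2-e^3)*y)^5*((e^2-e^3)*x+(e-e^4)*y) - 5*e^2*(-(e-e^4)*x+(e^2-e^3)*y)^4*((e^2-e^3)*x+(e-e^4)*y)^2 - 5*e^3*(-(e-e^4)*x+(e^2-e^3)*y)^2*((e^2-e^3)*x+(e-e^4)*y)^4 - 2*e^1*(-(e-e^4)*x+(e^2-e^3)*y)*((e^2-e^3)*x+(e-e^4)*y)^5 + e^4*((e^2-e^3)*x+(e-e^4)*y)^6)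
    = 125 * (e^3*x^6 + 2*e^2*x^5*y - 5*e^1*x^4*y^2 - 5*e^4*x^2*y^4 - 2*e^3*x*y^5 + e^2*y^6) := by
  linear_combination (((1)*e^24 + (-1)*e^23 + (-11)*e^21 + (19)*e^20 + (-8)*e^19 + (20)*e^18 + (-10)*e^17 + (-63)*e^16 + (62)*e^15 + (-42)*e^14 + (138)*e^13 + (-135)*e^12 + (4)*e^11 + (-1)*e^10 + (4)*e^9 + (123)*e^8 + (-125)*e^7 + (125)*e^3 + (-125)*e^2)*x^0*y^6 +
    ((6)*e^23 + (-2)*e^22 + (-12)*e^21 + (-52)*e^20 + (150)*e^19 + (-204)*e^18 + (346)*e^17 + (-436)*e^16 + (364)*e^15 + (-400)*e^14 + (340)*e^13 + (-56)*e^12 + (-12)*e^11 + (28)*e^10 + (-260)*e^9 + (248)*e^8 + (2)*e^7 + (-250)*e^4 + (250)*e^3)*x^1*y^5 +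
    ((-5)*e^23 + (20)*e^22 + (15)*e^21 + (-145)*e^20 + (165)*e^19 + (-15)*e^18 + (50)*e^17 + (-90)*e^16 + (-220)*e^15 + (210)*e^14 + (235)*e^13 + (-220)*e^12 + (175)*e^11 + (-660)*e^10 + (600)*e^9 + (10)*e^8 + (-625)*e^5 + (625)*e^4)*x^2*y^4 +
    ((-40)*e^22 + (140)*e^21 + (-120)*e^20 + (-40)*e^19 + (20)*e^18 + (240)*e^16 + (-240)*e^15 + (-20)*e^13 + (40)*e^12 + (120)*e^11 + (-140)*e^10 + (40)*e^9)*x^3*y^3 +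
    ((10)*e^23 + (-25)*e^22 + (-35)*e^21 + (175)*e^20 + (-220)*e^19 + (235)*e^18 + (-415)*e^17 + (405)*e^16 + (-90)*e^15 + (50)*e^14 + (-15)*e^13 + (-460)*e^12 + (480)*e^11 + (15)*e^10 + (20)*e^9 + (-5)*e^8 + (-625)*e^7 + (625)*e^6 + (-625)*e^2 + (625)*e)*x^4*y^2 +
    ((-2)*e^24 + (2)*e^23 + (10)*e^22 + (-28)*e^21 + (12)*e^20 + (56)*e^19 + (-90)*e^18 + (150)*e^17 + (-364)*e^16 + (436)*e^15 + (-346)*e^14 + (454)*e^13 + (-400)*e^12 + (52)*e^11 + (12)*e^10 + (2)*e^9 + (244)*e^8 + (-250)*e^7 + (250)*e^3 + (-250)*e^2)*x^5*y^1 +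
    ((-2)*e^23 + (4)*e^22 + (-1)*e^21 + (4)*e^20 + (-10)*e^19 + (13)*e^18 + (-42)*e^17 + (62)*e^16 + (-63)*e^15 + (115)*e^14 + (-105)*e^13 + (-8)*e^12 + (19)*e^11 + (-11)*e^10 + (125)*e^9 + (-126)*e^8 + (1)*e^7 + (125)*e^4 + (-125)*e^3)*x^6*y^0) * he

theorem ht3 (e x y : ℂ) (he : e^4+e^3+e^2+e+1 = 0) :
    (e^4*(-(e-e^4)*x+(e^2-e^3)*y)^6 + 2*e^1*(-(e-e^4)*x+(e^2-e^3)*y)^5*((e^2-e^3)*x+(e-e^4)*y) - 5*e^3*(-(e-e^4)*x+(e^2-e^3)*y)^4*((e^2-e^3)*x+(e-e^4)*y)^2 - 5*e^2*(-(e-e^4)*x+(e^2-e^3)*y)^2*((e^2-e^3)*x+(e-e^4)*y)^4 - 2*e^4*(-(e-e^4)*x+(e^2-e^3)*y)*((e^2-e^3)*x+(e-e^4)*y)^5 + e^1*((e^2-e^3)*x+(e-e^4)*y)^6)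
    = 125 * (e^2*x^6 + 2*e^3*x^5*y - 5*e^4*x^4*y^2 - 5*e^1*x^2*y^4 - 2*e^2*x*y^5 + e^3*y^6) := by
  linear_combination (((-2)*e^23 + (4)*e^22 + (-1)*e^21 + (4)*e^20 + (-10)*e^19 + (13)*e^18 + (-42)*e^17 + (62)*e^16 + (-63)*e^15 + (115)*e^14 + (-105)*e^13 + (-8)*e^12 + (19)*e^11 + (-11)*e^10 + (125)*e^9 + (-126)*e^8 + (1)*e^7 + (125)*e^4 + (-125)*e^3)*x^0*y^6 +
    ((2)*e^24 + (-2)*e^23 + (-10)*e^22 + (28)*e^21 + (-12)*e^20 + (-56)*e^19 + (90)*e^18 + (-150)*e^17 + (364)*e^16 + (-436)*e^15 + (346)*e^14 + (-454)*e^13 + (400)*e^12 + (-52)*e^11 + (-12)*e^10 + (-2)*e^9 + (-244)*e^8 + (250)*e^7 + (-250)*e^3 + (250)*e^2)*x^1*y^5 +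
    ((10)*e^23 + (-25)*e^22 + (-35)*e^21 + (175)*e^20 + (-220)*e^19 + (235)*e^18 + (-415)*e^17 + (405)*e^16 + (-90)*e^15 + (50)*e^14 + (-15)*e^13 + (-460)*e^12 + (480)*e^11 + (15)*e^10 + (20)*e^9 + (-5)*e^8 + (-625)*e^7 + (625)*e^6 + (-625)*e^2 + (625)*e)*x^2*y^4 +
    ((40)*e^22 + (-140)*e^21 + (120)*e^20 + (40)*e^19 + (-20)*e^18 + (-240)*e^16 + (240)*e^15 + (20)*e^13 + (-40)*e^12 + (-120)*e^11 + (140)*e^10 + (-40)*e^9)*x^3*y^3 +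
    ((-5)*e^23 + (20)*e^22 + (15)*e^21 + (-145)*e^20 + (165)*e^19 + (-15)*e^18 + (50)*e^17 + (-90)*e^16 + (-220)*e^15 + (210)*e^14 + (235)*e^13 + (-220)*e^12 + (175)*e^11 + (-660)*e^10 + (600)*e^9 + (10)*e^8 + (-625)*e^5 + (625)*e^4)*x^4*y^2 +
    ((-6)*e^23 + (2)*e^22 + (12)*e^21 + (52)*e^20 + (-150)*e^19 + (204)*e^18 + (-346)*e^17 + (436)*e^16 + (-364)*e^15 + (400)*e^14 + (-340)*e^13 + (56)*e^12 + (12)*e^11 + (-28)*e^10 + (260)*e^9 + (-248)*e^8 + (-2)*e^7 + (250)*e^4 + (-250)*e^3)*x^5*y^1 +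
    ((1)*e^24 + (-1)*e^23 + (-11)*e^21 + (19)*e^20 + (-8)*e^19 + (20)*e^18 + (-10)*e^17 + (-63)*e^16 + (62)*e^15 + (-42)*e^14 + (138)*e^13 + (-135)*e^12 + (4)*e^11 + (-1)*e^10 + (4)*e^9 + (123)*e^8 + (-125)*e^7 + (125)*e^3 + (-125)*e^2)*x^6*y^0) * he

theorem ht4 (e x y : ℂ) (he : e^4+e^3+e^2+e+1 = 0) :
    (e^2*(-(e-e^4)*x+(e^2-e^3)*y)^6 + 2*e^3*(-(e-e^4)*x+(e^2-e^3)*y)^5*((e^2-e^3)*x+(e-e^4)*y) - 5*e^4*(-(e-e^4)*x+(e^2-e^3)*y)^4*((e^2-e^3)*x+(e-e^4)*y)^2 - 5*e^1*(-(e-e^4)*x+(e^2-e^3)*y)^2*((e^2-e^3)*x+(e-e^4)*y)^4 - 2*e^2*(-(e-e^4)*x+(e^2-e^3)*y)*((e^2-e^3)*x+(e-e^4)*y)^5 + e^3*((e^2-e^3)*x+(e-e^4)*y)^6)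
    = 125 * (e^4*x^6 + 2*e^1*x^5*y - 5*e^3*x^4*y^2 - 5*e^2*x^2*y^4 - 2*e^4*x*y^5 + e^1*y^6) := by
  linear_combination (((1)*e^23 + (-1)*e^22 + (-2)*e^21 + (-7)*e^20 + (24)*e^19 + (-22)*e^18 + (27)*e^17 + (-26)*e^16 + (-31)*e^15 + (62)*e^14 + (-74)*e^13 + (154)*e^12 + (-142)*e^11 + (18)*e^10 + (-6)*e^9 + (125)*e^7 + (-125)*e^6 + (125)*e^2 + (-125)*e)*x^0*y^6 +
    ((8)*e^22 + (6)*e^21 + (-74)*e^20 + (68)*e^19 + (2)*e^18 + (64)*e^17 + (-52)*e^16 + (-122)*e^15 + (44)*e^14 + (126)*e^13 + (-32)*e^12 + (36)*e^11 + (-264)*e^10 + (228)*e^9 + (12)*e^8 + (-250)*e^5 + (250)*e^4)*x^1*y^5 +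
    ((-30)*e^22 + (110)*e^21 + (-90)*e^20 + (-55)*e^19 + (25)*e^18 + (-50)*e^17 + (425)*e^16 + (-450)*e^15 + (230)*e^14 + (-555)*e^13 + (560)*e^12 + (65)*e^11 + (-110)*e^10 + (50)*e^9 + (-620)*e^8 + (620)*e^7 + (-625)*e^3 + (625)*e^2)*x^2*y^4 +
    ((20)*e^23 + (-40)*e^22 + (-60)*e^21 + (220)*e^20 + (-300)*e^19 + (500)*e^18 + (-760)*e^17 + (780)*e^16 + (-780)*e^15 + (760)*e^14 + (-500)*e^13 + (300)*e^12 + (-220)*e^11 + (60)*e^10 + (40)*e^9 + (-20)*e^8)*x^3*y^3 +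
    ((-5)*e^24 + (5)*e^23 + (50)*e^22 + (-110)*e^21 + (65)*e^20 + (-65)*e^19 + (70)*e^18 + (230)*e^17 + (-450)*e^16 + (425)*e^15 + (-675)*e^14 + (650)*e^13 + (-55)*e^12 + (-90)*e^11 + (110)*e^10 + (-655)*e^9 + (625)*e^8 + (-625)*e^4 + (625)*e^3)*x^4*y^2 +
    ((-12)*e^23 + (22)*e^22 + (14)*e^21 + (-36)*e^20 + (32)*e^19 + (-126)*e^18 + (206)*e^17 + (-128)*e^16 + (52)*e^15 + (-64)*e^14 + (-2)*e^13 + (182)*e^12 + (-176)*e^11 + (-6)*e^10 + (-8)*e^9 + (250)*e^7 + (-250)*e^6 + (250)*e^2 + (-250)*e)*x^5*y^1 +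
    ((-6)*e^22 + (18)*e^21 + (-17)*e^20 + (29)*e^19 + (-74)*e^18 + (62)*e^17 + (-31)*e^16 + (99)*e^15 + (-98)*e^14 + (-22)*e^13 + (24)*e^12 + (-7)*e^11 + (123)*e^10 + (-126)*e^9 + (1)*e^8 + (125)*e^5 + (-125)*e^4)*x^6*y^0) * he

theorem hprod (e x y : ℂ) (he : e^4+e^3+e^2+e+1 = 0) :
    (x^6 + 2*x^5*y - 5*x^4*y^2 - 5*x^2*y^4 - 2*x*y^5 + y^6) *
    (e^3*x^6 + 2*e^2*x^5*y - 5*e^1*x^4*y^2 - 5*e^4*x^2*y^4 - 2*e^3*x*y^5 + e^2*y^6) *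
    (e^1*x^6 + 2*e^4*x^5*y - 5*e^2*x^4*y^2 - 5*e^3*x^2*y^4 - 2*e^1*x*y^5 + e^4*y^6) *
    (e^4*x^6 + 2*e^1*x^5*y - 5*e^3*x^4*y^2 - 5*e^2*x^2*y^4 - 2*e^4*x*y^5 + e^1*y^6) *
    (e^2*x^6 + 2*e^3*x^5*y - 5*e^4*x^4*y^2 - 5*e^1*x^2*y^4 - 2*e^2*x*y^5 + e^3*y^6) = Ff x y := by
  obtain ⟨A, hA⟩ : ∃ A : ℂ, A = (1)*x^12 + (-2)*x^11*y + (4)*x^10*y^2 + (10)*x^9*y^3 + (30)*x^8*y^4 + (-4)*x^7*y^5 + (3)*x^6*y^6 + (4)*x^5*y^7 + (30)*x^4*y^8 + (-10)*x^3*y^9 + (4)*x^2*y^10 + (2)*x*y^11 + (1)*y^12 := ⟨_, rfl⟩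
  obtain ⟨B, hB⟩ : ∃ B : ℂ, B = (-2)*x^11*y + (-5)*x^10*y^2 + (10)*x^9*y^3 + (5)*x^8*y^4 + (-10)*x^7*y^5 + (28)*x^6*y^6 + (10)*x^5*y^7 + (5)*x^4*y^8 + (-10)*x^3*y^9 + (-5)*x^2*y^10 + (2)*x*y^11 := ⟨_, rfl⟩
  have h14 : (e^3*x^6 + 2*e^2*x^5*y - 5*e^1*x^4*y^2 - 5*e^4*x^2*y^4 - 2*e^3*x*y^5 + e^2*y^6) *
    (e^2*x^6 + 2*e^3*x^5*y - 5*e^4*x^4*y^2 - 5*e^1*x^2*y^4 - 2*e^2*x*y^5 + e^3*y^6) = A + (e^2+e^3)*B := by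
    rw [hA, hB]
    linear_combination (((1)*e + (-1))*x^0*y^12 +
    ((-2)*e^2 + (2)*e + (-2))*x^1*y^11 +
    ((-5)*e^3 + (5)*e^2 + (4)*e + (-4))*x^2*y^10 +
    ((10)*e^2 + (-10)*e + (10))*x^3*y^9 +
    ((-5)*e^2 + (30)*e + (-30))*x^4*y^8 +
    ((10)*e^3 + (-10)*e^2 + (4)*e + (-4))*x^5*y^7 +
    ((25)*e^4 + (-25)*e^3 + (-3)*e^2 + (3)*e + (-3))*x^6*y^6 +
    ((-10)*e^3 + (10)*e^2 + (-4)*e + (4))*x^7*y^5 +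
    ((-5)*e^2 + (30)*e + (-30))*x^8*y^4 +
    ((-10)*e^2 + (10)*e + (-10))*x^9*y^3 +
    ((-5)*e^3 + (5)*e^2 + (4)*e + (-4))*x^10*y^2 +
    ((2)*e^2 + (-2)*e + (2))*x^11*y^1 +
    ((1)*e + (-1))*x^12*y^0) * he
  have h23 : (e^1*x^6 + 2*e^4*x^5*y - 5*e^2*x^4*y^2 - 5*e^3*x^2*y^4 - 2*e^1*x*y^5 + e^4*y^6) *
    (e^4*x^6 + 2*e^1*x^5*y - 5*e^3*x^4*y^2 - 5*e^2*x^2*y^4 - 2*e^4*x*y^5 + e^1*y^6) = A - B - (e^2+e^3)*B := by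
    rw [hA, hB]
    linear_combination (((1)*e + (-1))*x^0*y^12 +
    ((-2)*e^4 + (2)*e^3)*x^1*y^11 +
    ((-5)*e^2 + (9)*e + (-9))*x^2*y^10 +
    ((10)*e^3 + (-10)*e^2)*x^3*y^9 +
    ((-5)*e^3 + (5)*e^2 + (25)*e + (-25))*x^4*y^8 +
    ((10)*e^2 + (-6)*e + (6))*x^5*y^7 +
    ((-3)*e^4 + (3)*e^3 + (25)*e^2 + (-25)*e + (25))*x^6*y^6 +
    ((-10)*e^2 + (6)*e + (-6))*x^7*y^5 +
    ((-5)*e^3 + (5)*e^2 + (25)*e + (-25))*x^8*y^4 +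
    ((-10)*e^3 + (10)*e^2)*x^9*y^3 +
    ((-5)*e^2 + (9)*e + (-9))*x^10*y^2 +
    ((2)*e^4 + (-2)*e^3)*x^11*y^1 +
    ((1)*e + (-1))*x^12*y^0) * he
  have h4 : (A + (e^2+e^3)*B) * (A - B - (e^2+e^3)*B) = A^2 - A*B - B^2 := by
    linear_combination (-(e^2+e-1)*B^2) * he
  have h5 : (x^6 + 2*x^5*y - 5*x^4*y^2 - 5*x^2*y^4 - 2*x*y^5 + y^6) * (A^2 - A*B - B^2) = Ff x y := by
    rw [hA, hB, Ff]; ring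
  rw [← h5, ← h4, ← h14, ← h23]
  ring

/-- Invariance of `F₃₀` under the order four icosahedral generator. -/
theorem Ff_T (e x y : ℂ) (he : e^4+e^3+e^2+e+1 = 0) :
    Ff (-((e+2*e^2-2*e^3-e^4)/5) * x + ((2*e-e^2+e^3-2*e^4)/5) * y)
      (((2*e-e^2+e^3-2*e^4)/5) * x + ((e+2*e^2-2*e^3-e^4)/5) * y) = Ff x y := by
  have hw : (1+2*e+2*e^4)^2 = 5 := by
    linear_combination ((4)*e^4 + (-4)*e^3 + (8)*e + (-4)) * he
  have hw30 : (1+2*e+2*e^4)^30 = 5^15 := by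
    rw [show (30:ℕ) = 2*15 from rfl, pow_mul, hw]
  have h1 : (1+2*e+2*e^4) * (-((e+2*e^2-2*e^3-e^4)/5) * x + ((2*e-e^2+e^3-2*e^4)/5) * y)
      = -(e-e^4)*x+(e^2-e^3)*y := by
    linear_combination ((2/5)*e^4*x + (-4/5)*e^4*y + (2/5)*e^3*x + (6/5)*e^3*y + (-8/5)*e^2*x + (-4/5)*e^2*y + (4/5)*e*x + (2/5)*e*y) * he
  have h2 : (1+2*e+2*e^4) * (((2*e-e^2+e^3-2*e^4)/5) * x + ((e+2*e^2-2*e^3-e^4)/5) * y)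
      = (e^2-e^3)*x+(e-e^4)*y := by
    linear_combination ((-4/5)*e^4*x + (-2/5)*e^4*y + (6/5)*e^3*x + (-2/5)*e^3*y + (-4/5)*e^2*x + (8/5)*e^2*y + (2/5)*e*x + (-4/5)*e*y) * he
  have h3 := Ff_smul (1+2*e+2*e^4)
    (-((e+2*e^2-2*e^3-e^4)/5) * x + ((2*e-e^2+e^3-2*e^4)/5) * y)
    (((2*e-e^2+e^3-2*e^4)/5) * x + ((e+2*e^2-2*e^3-e^4)/5) * y)
  rw [h1, h2, hw30, ← hprod e _ _ he, ht0 e x y he, ht1 e x y he, ht2 e x y he, ht3 e x y he,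
    ht4 e x y he] at h3
  have h4 := hprod e x y he
  have h5 : (5:ℂ)^15 ≠ 0 := by norm_num
  apply mul_left_cancel₀ h5
  rw [← h3, ← h4]
  ring

section Derivs
variable {R : Type*} [CommRing R]

/-- `F₃₀` over an arbitrary commutative ring. -/
def gF (x y : R) : R :=
  x ^ 30 + 522 * (x ^ 25 * y ^ 5 - x ^ 5 * y ^ 25)
      - 10005 * (x ^ 20 * y ^ 10 + x ^ 10 * y ^ 20) + y ^ 30

/-- Partial derivative `F_x`. -/
def gFx (x y : R) : R :=
  30 * x ^ 29 + 522 * (25 * x ^ 24 * y ^ 5 - 5 * x ^ 4 * y ^ 25)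
      - 10005 * (20 * x ^ 19 * y ^ 10 + 10 * x ^ 9 * y ^ 20)

/-- Partial derivative `F_y`. -/
def gFy (x y : R) : R :=
  522 * (5 * x ^ 25 * y ^ 4 - 25 * x ^ 5 * y ^ 24)
      - 10005 * (10 * x ^ 20 * y ^ 9 + 20 * x ^ 10 * y ^ 19) + 30 * y ^ 29

/-- First directional derivative of `F₃₀` in the direction `(c, d)`. -/
def gD1 (c d x y : R) : R := c * gFx x y + d * gFy x y

/-- Second directional derivative. -/
def gD2 (c d x y : R) : R :=
  c ^ 2 * (870 * x ^ 28 + 522 * (600 * x ^ 23 * y ^ 5 - 20 * x ^ 3 * y ^ 25)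
      - 10005 * (380 * x ^ 18 * y ^ 10 + 90 * x ^ 8 * y ^ 20))
  + 2 * c * d * (522 * (125 * x ^ 24 * y ^ 4 - 125 * x ^ 4 * y ^ 24)
      - 10005 * (200 * x ^ 19 * y ^ 9 + 200 * x ^ 9 * y ^ 19))
  + d ^ 2 * (522 * (20 * x ^ 25 * y ^ 3 - 600 * x ^ 5 * y ^ 23)
      - 10005 * (90 * x ^ 20 * y ^ 8 + 380 * x ^ 10 * y ^ 18) + 870 * y ^ 28)

/-- Third directional derivative. -/
def gD3 (c d x y : R) : R :=
  c ^ 3 * (24360 * x ^ 27 + 522 * (13800 * x ^ 22 * y ^ 5 - 60 * x ^ 2 * y ^ 25)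
      - 10005 * (6840 * x ^ 17 * y ^ 10 + 720 * x ^ 7 * y ^ 20))
  + 3 * c ^ 2 * d * (522 * (3000 * x ^ 23 * y ^ 4 - 500 * x ^ 3 * y ^ 24)
      - 10005 * (3800 * x ^ 18 * y ^ 9 + 1800 * x ^ 8 * y ^ 19))
  + 3 * c * d ^ 2 * (522 * (500 * x ^ 24 * y ^ 3 - 3000 * x ^ 4 * y ^ 23)
      - 10005 * (1800 * x ^ 19 * y ^ 8 + 3800 * x ^ 9 * y ^ 18))
  + d ^ 3 * (522 * (60 * x ^ 25 * y ^ 2 - 13800 * x ^ 5 * y ^ 22)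
      - 10005 * (720 * x ^ 20 * y ^ 7 + 6840 * x ^ 10 * y ^ 17) + 24360 * y ^ 27)

end Derivs

section DerivsPoly
open Polynomial

theorem deriv_gF (a b c d : ℂ) :
    derivative (gF (Polynomial.C a + Polynomial.C c * Polynomial.X) (Polynomial.C b + Polynomial.C d * Polynomial.X)) =
      gD1 (Polynomial.C c) (Polynomial.C d) (Polynomial.C a + Polynomial.C c * Polynomial.X) (Polynomial.C b + Polynomial.C d * Polynomial.X) := by
  obtain ⟨p, hp⟩ : ∃ p : ℂ[X], p = Polynomial.C a + Polynomial.C c * Polynomial.X := ⟨_, rfl⟩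
  obtain ⟨q, hq⟩ : ∃ q : ℂ[X], q = Polynomial.C b + Polynomial.C d * Polynomial.X := ⟨_, rfl⟩
  have hp' : derivative p = Polynomial.C c := by simp [hp]
  have hq' : derivative q = Polynomial.C d := by simp [hq]
  rw [← hp, ← hq]
  unfold gF gD1 gFx gFy
  simp only [derivative_add, derivative_sub, derivative_mul, derivative_pow, hp', hq',
    derivative_ofNat, map_ofNat, Nat.cast_ofNat]
  ring

theorem deriv_gD1 (a b c d : ℂ) :
    derivative (gD1 (Polynomial.C c) (Polynomial.C d) (Polynomial.C a + Polynomial.C c * Polynomial.X) (Polynomial.C b + Polynomial.C d * Polynomial.X)) =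
      gD2 (Polynomial.C c) (Polynomial.C d) (Polynomial.C a + Polynomial.C c * Polynomial.X) (Polynomial.C b + Polynomial.C d * Polynomial.X) := by
  obtain ⟨p, hp⟩ : ∃ p : ℂ[X], p = Polynomial.C a + Polynomial.C c * Polynomial.X := ⟨_, rfl⟩
  obtain ⟨q, hq⟩ : ∃ q : ℂ[X], q = Polynomial.C b + Polynomial.C d * Polynomial.X := ⟨_, rfl⟩
  have hp' : derivative p = Polynomial.C c := by simp [hp]
  have hq' : derivative q = Polynomial.C d := by simp [hq]
  rw [← hp, ← hq]
  unfold gD2 gD1 gFx gFy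
  simp only [derivative_add, derivative_sub, derivative_mul, derivative_pow, hp', hq',
    derivative_ofNat, map_ofNat, Nat.cast_ofNat, Polynomial.derivative_C]
  ring

theorem deriv_gD2 (a b c d : ℂ) :
    derivative (gD2 (Polynomial.C c) (Polynomial.C d) (Polynomial.C a + Polynomial.C c * Polynomial.X) (Polynomial.C b + Polynomial.C d * Polynomial.X)) =
      gD3 (Polynomial.C c) (Polynomial.C d) (Polynomial.C a + Polynomial.C c * Polynomial.X) (Polynomial.C b + Polynomial.C d * Polynomial.X) := by
  obtain ⟨p, hp⟩ : ∃ p : ℂ[X], p = Polynomial.C a + Polynomial.C c * Polynomial.X := ⟨_, rfl⟩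
  obtain ⟨q, hq⟩ : ∃ q : ℂ[X], q = Polynomial.C b + Polynomial.C d * Polynomial.X := ⟨_, rfl⟩
  have hp' : derivative p = Polynomial.C c := by simp [hp]
  have hq' : derivative q = Polynomial.C d := by simp [hq]
  rw [← hp, ← hq]
  unfold gD2 gD3
  simp only [derivative_add, derivative_sub, derivative_mul, derivative_pow, hp', hq',
    derivative_ofNat, map_ofNat, Nat.cast_ofNat, Polynomial.derivative_C]
  ring

theorem eval_gF (p q : ℂ[X]) (s : ℂ) : Polynomial.eval s (gF p q) = Ff (Polynomial.eval s p) (Polynomial.eval s q) := by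
  simp [gF, Ff]

theorem eval_gD1 (c d : ℂ) (p q : ℂ[X]) (s : ℂ) :
    Polynomial.eval s (gD1 (Polynomial.C c) (Polynomial.C d) p q) = gD1 c d (Polynomial.eval s p) (Polynomial.eval s q) := by
  simp [gD1, gFx, gFy]

theorem eval_gD2 (c d : ℂ) (p q : ℂ[X]) (s : ℂ) :
    Polynomial.eval s (gD2 (Polynomial.C c) (Polynomial.C d) p q) = gD2 c d (Polynomial.eval s p) (Polynomial.eval s q) := by
  simp [gD2]

theorem eval_gD3 (c d : ℂ) (p q : ℂ[X]) (s : ℂ) :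
    Polynomial.eval s (gD3 (Polynomial.C c) (Polynomial.C d) p q) = gD3 c d (Polynomial.eval s p) (Polynomial.eval s q) := by
  simp [gD3]

/-- Taylor data of `F₃₀` along a line are preserved. -/
theorem taylor_eq {a b c d : ℂ} (h : ∀ s, Ff (a + c * s) (b + d * s) = Ff 1 s) :
    gD1 c d a b = 0 ∧ gD2 c d a b = 0 ∧ gD3 c d a b = 0 := by
  have h0 : gF (Polynomial.C a + Polynomial.C c * Polynomial.X) (Polynomial.C b + Polynomial.C d * Polynomial.X) =
      gF (Polynomial.C 1 + Polynomial.C 0 * Polynomial.X : ℂ[X]) (Polynomial.C 0 + Polynomial.C 1 * Polynomial.X) := by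
    apply Polynomial.funext
    intro s
    rw [eval_gF, eval_gF]
    simpa using h s
  have h1 := congrArg derivative h0
  rw [deriv_gF, deriv_gF] at h1
  have h2 := congrArg derivative h1
  rw [deriv_gD1, deriv_gD1] at h2
  have h3 := congrArg derivative h2
  rw [deriv_gD2, deriv_gD2] at h3
  have k1 := congrArg (Polynomial.eval 0) h1
  have k2 := congrArg (Polynomial.eval 0) h2
  have k3 := congrArg (Polynomial.eval 0) h3
  rw [eval_gD1, eval_gD1] at k1
  rw [eval_gD2, eval_gD2] at k2
  rw [eval_gD3, eval_gD3] at k3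
  simp only [Polynomial.eval_add, Polynomial.eval_mul, Polynomial.eval_C, Polynomial.eval_X, mul_zero, add_zero] at k1 k2 k3
  refine ⟨k1.trans ?_, k2.trans ?_, k3.trans ?_⟩
  · simp [gD1, gFx, gFy]
  · simp [gD2]
  · simp [gD3]

end DerivsPoly

/-- The Klein vertex form of degree 12. -/
def fv (x y : ℂ) : ℂ := x * y * (x ^ 10 + 11 * x ^ 5 * y ^ 5 - y ^ 10)

/-- The Klein face form of degree 20. -/
def Hv (x y : ℂ) : ℂ :=
  -(x ^ 20 + y ^ 20) + 228 * (x ^ 15 * y ^ 5 - x ^ 5 * y ^ 15) - 494 * x ^ 10 * y ^ 10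

theorem euler_F (x y : ℂ) : x * gFx x y + y * gFy x y = 30 * Ff x y := by
  unfold gFx gFy Ff; ring

theorem cov2 (x y : ℂ) : gD2 (-gFy x y) (gFx x y) x y =
    -9396000 * (fv x y ^ 3 * Hv x y * Ff x y) := by
  unfold gD2 gFx gFy fv Hv Ff; ring

theorem cov3 (x y : ℂ) : gD3 (-gFy x y) (gFx x y) x y =
    -811814400000 * (Ff x y * fv x y ^ 7) - 845640000 * (Ff x y * fv x y ^ 2 * Hv x y ^ 3) := by
  unfold gD3 gFx gFy fv Hv Ff; ring

theorem gD2_smul (k c d x y : ℂ) : gD2 (k * c) (k * d) x y = k ^ 2 * gD2 c d x y := by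
  unfold gD2; ring

theorem gD3_smul (k c d x y : ℂ) : gD3 (k * c) (k * d) x y = k ^ 3 * gD3 c d x y := by
  unfold gD3; ring

/-- The first column of a matrix preserving `F₃₀` is a zero of the vertex form. -/
theorem fv_eq_zero {a b c d : ℂ} (hdet : a * d - b * c ≠ 0)
    (h : ∀ x y, Ff (a * x + c * y) (b * x + d * y) = Ff x y) : fv a b = 0 := by
  have hF : Ff a b = 1 := by
    have := h 1 0
    simpa [Ff] using this
  obtain ⟨h1, h2, h3⟩ := taylor_eq (a := a) (b := b) (c := c) (d := d) (by
    intro s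
    have := h 1 s
    simpa using this)
  have he := euler_F a b
  rw [hF] at he
  unfold gD1 at h1
  have hc : c = (-(a * d - b * c) / 30 * -1) * (-gFy a b) := by
    linear_combination (-c/30) * he + (a/30) * h1
  have hd : d = (-(a * d - b * c) / 30 * -1) * (gFx a b) := by
    linear_combination (-d/30) * he + (b/30) * h1
  have hk : (-(a * d - b * c) / 30 * -1) ≠ 0 := by
    intro h0
    apply hdet
    linear_combination 30 * h0
  generalize (-(a * d - b * c) / 30 * -1) = k at hc hd hk
  rw [hc, hd, gD2_smul, cov2, hF] at h2
  rw [hc, hd, gD3_smul, cov3, hF] at h3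
  by_contra hf
  have hH : Hv a b = 0 := by
    simpa [hk, hf] using h2
  rw [hH] at h3
  simp [hk, hf] at h3

/-- A primitive fifth root of unity. -/
def ee : ℂ := Complex.exp (2 * Real.pi * Complex.I / (5 : ℕ))

theorem ee_prim : IsPrimitiveRoot ee 5 := Complex.isPrimitiveRoot_exp 5 (by norm_num)

theorem ee_sum : ee^4 + ee^3 + ee^2 + ee + 1 = 0 := by
  have := ee_prim.geom_sum_eq_zero (by norm_num)
  simp only [Finset.sum_range_succ, Finset.sum_range_zero] at this
  linear_combination this

theorem ee_five : ee ^ 5 = 1 := ee_prim.pow_eq_one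

theorem ee_ne : ee ≠ 0 := ee_prim.ne_zero (by norm_num)

/-- Entry of the icosahedral generator. -/
def pp : ℂ := (ee+2*ee^2-2*ee^3-ee^4)/5

/-- Entry of the icosahedral generator. -/
def qq : ℂ := (2*ee-ee^2+ee^3-2*ee^4)/5

theorem pq_det : pp ^ 2 + qq ^ 2 = -1 := by
  unfold pp qq
  linear_combination ((1/5)*ee^4 + (-1/5)*ee^3 + (1/5)*ee^2 + (-1)*ee + (1)) * ee_sum

theorem pq_golden : pp ^ 2 - pp * qq - qq ^ 2 = 0 := by
  unfold pp qq
  linear_combination ((-1/5)*ee^4 + (2/5)*ee^3 + (-1/5)*ee^2) * ee_sum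

theorem qq_ne : qq ≠ 0 := by
  intro h
  have h1 := pq_golden
  have h2 := pq_det
  rw [h] at h1 h2
  have : (0:ℂ) = -1 := by linear_combination h2 - h1
  norm_num at this

theorem pp_ne : pp ≠ 0 := by
  intro h
  have h1 := pq_golden
  have h2 := pq_det
  rw [h] at h1 h2
  have : (0:ℂ) = -1 := by linear_combination h2 + h1
  norm_num at this

/-- `F₃₀` on vectors. -/
def Fv (v : Fin 2 → ℂ) : ℂ := Ff (v 0) (v 1)

/-- The group of unimodular matrices preserving `F₃₀`. -/
def Gam : Subgroup (Matrix.SpecialLinearGroup (Fin 2) ℂ) where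
  carrier := {A | ∀ v, Fv ((A : Matrix (Fin 2) (Fin 2) ℂ) *ᵥ v) = Fv v}
  one_mem' := by intro v; simp
  mul_mem' := by
    intro A B hA hB v
    rw [Matrix.SpecialLinearGroup.coe_mul, ← Matrix.mulVec_mulVec, hA, hB]
  inv_mem' := by
    intro A hA v
    rw [← hA, Matrix.mulVec_mulVec, ← Matrix.SpecialLinearGroup.coe_mul, mul_inv_cancel]
    simp

theorem mem_Gam {A : Matrix.SpecialLinearGroup (Fin 2) ℂ} :
    A ∈ Gam ↔ ∀ v, Fv ((A : Matrix (Fin 2) (Fin 2) ℂ) *ᵥ v) = Fv v := Iff.rfl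

/-- Rotation of order five. -/
def mS : Matrix.SpecialLinearGroup (Fin 2) ℂ := ⟨!![ee^3, 0; 0, ee^2], by
  rw [Matrix.det_fin_two_of]
  linear_combination ee_five⟩

/-- Order four element. -/
def mT : Matrix.SpecialLinearGroup (Fin 2) ℂ := ⟨!![-pp, qq; qq, pp], by
  rw [Matrix.det_fin_two_of]
  linear_combination -pq_det⟩

/-- Order four element. -/
def mJ : Matrix.SpecialLinearGroup (Fin 2) ℂ := ⟨!![0, 1; -1, 0], by
  rw [Matrix.det_fin_two_of]
  ring⟩

theorem mS_mem : mS ∈ Gam := by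
  rw [mem_Gam]
  intro v
  simp only [mS, Fv, Matrix.mulVec, dotProduct, Fin.sum_univ_two, Matrix.of_apply,
    Matrix.cons_val', Matrix.cons_val_zero, Matrix.cons_val_one, Matrix.cons_val_fin_one, zero_mul,
    add_zero, zero_add, Ff]
  have h1 : (ee^3 * v 0)^5 = (v 0)^5 := by
    rw [mul_pow, ← pow_mul, show 3*5 = 5*3 from rfl, pow_mul, ee_five]; ring
  have h2 : (ee^2 * v 1)^5 = (v 1)^5 := by
    rw [mul_pow, ← pow_mul, show 2*5 = 5*2 from rfl, pow_mul, ee_five]; ring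
  generalize ee^3 * v 0 = a at *
  generalize ee^2 * v 1 = b at *
  rw [show a^30 = (a^5)^6 by ring, show a^25 = (a^5)^5 by ring, show a^20 = (a^5)^4 by ring,
    show a^10 = (a^5)^2 by ring, show b^30 = (b^5)^6 by ring, show b^25 = (b^5)^5 by ring,
    show b^20 = (b^5)^4 by ring, show b^10 = (b^5)^2 by ring, h1, h2]
  ring

theorem mT_mem : mT ∈ Gam := by
  rw [mem_Gam]
  intro v
  simp only [mT, Fv, Matrix.mulVec, dotProduct, Fin.sum_univ_two, Matrix.of_apply,
    Matrix.cons_val', Matrix.cons_val_zero, Matrix.cons_val_one, Matrix.cons_val_fin_one]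
  exact Ff_T ee (v 0) (v 1) ee_sum

theorem mJ_mem : mJ ∈ Gam := by
  rw [mem_Gam]
  intro v
  simp only [mJ, Fv, Matrix.mulVec, dotProduct, Fin.sum_univ_two, Matrix.of_apply,
    Matrix.cons_val', Matrix.cons_val_zero, Matrix.cons_val_one, Matrix.cons_val_fin_one, Ff]
  ring

theorem mS_pow (k : ℕ) : ((mS ^ k : Matrix.SpecialLinearGroup (Fin 2) ℂ) : Matrix (Fin 2) (Fin 2) ℂ)
    = !![ee^(3*k), 0; 0, ee^(2*k)] := by
  induction k with
  | zero => ext i j; fin_cases i <;> fin_cases j <;> simp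
  | succ n ih =>
    rw [pow_succ, Matrix.SpecialLinearGroup.coe_mul, ih]
    simp only [mS, Matrix.mul_fin_two]
    congr 1
    ext i j; fin_cases i <;> fin_cases j <;> simp <;> ring

/-- Coset representatives. -/
def rep (m : Option (Fin 5)) (i : Fin 2) : Matrix.SpecialLinearGroup (Fin 2) ℂ :=
  (match m with
   | none => 1
   | some k => mS ^ (k : ℕ) * mT) * mJ ^ (i : ℕ)

theorem rep_mem (m : Option (Fin 5)) (i : Fin 2) : rep m i ∈ Gam := by
  unfold rep
  refine mul_mem ?_ (pow_mem mJ_mem _)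
  cases m with
  | none => exact one_mem _
  | some k => exact mul_mem (pow_mem mS_mem _) mT_mem

theorem fifth_root {u v : ℂ} (hv : v ≠ 0) (h : u ^ 5 = v ^ 5) : ∃ k : Fin 5, u = ee ^ (k:ℕ) * v := by
  have h1 : (u / v) ^ 5 = 1 := by
    rw [div_pow, h, div_self (pow_ne_zero _ hv)]
  obtain ⟨k, hk, h2⟩ := ee_prim.eq_pow_of_pow_eq_one h1
  exact ⟨⟨k, hk⟩, by simp only [h2]; field_simp⟩

/-- Every zero of the vertex form lies in the orbit of `(1 : 0)`. -/
theorem orbit {a b : ℂ} (h : fv a b = 0) : ∃ m i,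
    (rep m i : Matrix (Fin 2) (Fin 2) ℂ) 0 0 * b = (rep m i : Matrix (Fin 2) (Fin 2) ℂ) 1 0 * a := by
  by_cases hb : b = 0
  · exact ⟨none, 0, by simp [rep, hb]⟩
  by_cases ha : a = 0
  · refine ⟨none, 1, ?_⟩
    simp only [rep, Fin.val_one, pow_one, one_mul]
    simp [mJ, ha]
  have h10 : a ^ 10 + 11 * a ^ 5 * b ^ 5 - b ^ 10 = 0 := by
    simpa [fv, ha, hb] using h
  have hg : pp^10 - 11 * pp^5*qq^5 - qq^10 = 0 := by
    linear_combination ((1)*pp^8 + (1)*pp^7*qq + (2)*pp^6*qq^2 + (3)*pp^5*qq^3 + (5)*pp^4*qq^4 + (-3)*pp^3*qq^5 + (2)*pp^2*qq^6 + (-1)*pp*qq^7 + (1)*qq^8) * pq_golden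
  have hfac : (a^5*qq^5 + pp^5*b^5) * (a^5*pp^5 - qq^5*b^5) = 0 := by
    linear_combination (pp^5*qq^5) * h10 + (a^5*b^5) * hg
  rcases mul_eq_zero.1 hfac with h1 | h1
  · obtain ⟨k, hk⟩ := fifth_root (u := a * qq) (v := -pp*b) (by simp [pp_ne, hb])
      (by linear_combination h1)
    refine ⟨some k, 0, ?_⟩
    simp only [rep, Fin.val_zero, pow_zero, mul_one, Matrix.SpecialLinearGroup.coe_mul, mS_pow]
    simp only [mT, Matrix.mul_fin_two]
    simp
    linear_combination (-ee^(2*(k:ℕ))) * hk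
  · obtain ⟨k, hk⟩ := fifth_root (u := a * pp) (v := qq*b) (by simp [qq_ne, hb])
      (by linear_combination h1)
    refine ⟨some k, 1, ?_⟩
    simp only [rep, Fin.val_one, pow_one, Matrix.SpecialLinearGroup.coe_mul, mS_pow]
    simp only [mT, mJ, Matrix.mul_fin_two]
    simp
    linear_combination (-ee^(2*(k:ℕ))) * hk

/-- Upper triangular matrices preserving the form. -/
theorem tri {A : Matrix (Fin 2) (Fin 2) ℂ} (h10 : A 1 0 = 0) (h : ∀ v, Fv (A *ᵥ v) = Fv v) :
    ∃ l : ℂ, l ^ 30 = 1 ∧ ∃ j : Fin 5,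
      A = l • ((mS ^ (j:ℕ) : Matrix.SpecialLinearGroup (Fin 2) ℂ) : Matrix (Fin 2) (Fin 2) ℂ) := by
  have h' : ∀ x y, Ff (A 0 0 * x + A 0 1 * y) (A 1 1 * y) = Ff x y := by
    intro x y
    have := h ![x, y]
    simpa [Fv, Matrix.mulVec, dotProduct, Fin.sum_univ_two, h10] using this
  have hp : A 0 0 ^ 30 = 1 := by
    have := h' 1 0
    simpa [Ff] using this
  have hp0 : A 0 0 ≠ 0 := by
    intro h0; rw [h0] at hp; norm_num at hp
  obtain ⟨h1, -, -⟩ := taylor_eq (a := A 0 0) (b := 0) (c := A 0 1) (d := A 1 1) (by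
    intro s
    have := h' 1 s
    simpa using this)
  have hq : A 0 1 = 0 := by
    simpa [gD1, gFx, gFy, hp0] using h1
  have hpoly : gF (Polynomial.C (A 0 0)) (Polynomial.C (A 1 1) * Polynomial.X) =
      gF 1 (Polynomial.X) := by
    apply Polynomial.funext
    intro s
    rw [eval_gF, eval_gF]
    have := h' 1 s
    simpa [hq] using this
  have h5 := congrArg (fun P => Polynomial.coeff P 5) hpoly
  have e1 : ∀ u w : ℂ, Polynomial.coeff (gF (Polynomial.C u) (Polynomial.C w * Polynomial.X)) 5
      = 522 * (u^25*w^5) := by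
    intro u w
    have : gF (Polynomial.C u) (Polynomial.C w * Polynomial.X) =
      Polynomial.C (u^30) + Polynomial.C (522 * (u^25*w^5)) * Polynomial.X^5
        - Polynomial.C (522 * (u^5*w^25)) * Polynomial.X^25
        - Polynomial.C (10005 * (u^20*w^10)) * Polynomial.X^10
        - Polynomial.C (10005 * (u^10*w^20)) * Polynomial.X^20
        + Polynomial.C (w^30) * Polynomial.X^30 := by
      unfold gF
      simp only [map_mul, map_pow, map_ofNat]
      ring
    rw [this]
    simp only [Polynomial.coeff_add, Polynomial.coeff_sub, Polynomial.coeff_C_mul_X_pow,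
      Polynomial.coeff_C]
    norm_num
  have e2 := e1 1 1
  simp only [map_one, one_mul] at e2
  simp only [e1, e2] at h5
  have h25 : A 0 0 ^ 25 * A 1 1 ^ 5 = 1 := by
    linear_combination h5 / 522
  have hpr : A 0 0 ^ 5 = A 1 1 ^ 5 := by
    apply mul_left_cancel₀ (pow_ne_zero 25 hp0)
    rw [h25, ← hp]; ring
  have hr0 : A 1 1 ≠ 0 := by
    intro h0; rw [h0] at h25; norm_num at h25
  obtain ⟨j, hj⟩ := fifth_root hr0 hpr
  refine ⟨A 1 1 * ee ^ (3*(j:ℕ)), ?_, j, ?_⟩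
  · have : (ee ^ (3*(j:ℕ)))^30 = 1 := by
      rw [← pow_mul, show 3*(j:ℕ)*30 = 5*(18*j) by ring, pow_mul, ee_five, one_pow]
    rw [mul_pow, this, mul_one, show (30:ℕ) = 5*6 from rfl, pow_mul, ← hpr, ← pow_mul, hp]
  · have e5 : (ee^(j:ℕ))^5 = 1 := by rw [← pow_mul, mul_comm, pow_mul, ee_five, one_pow]
    rw [mS_pow]
    ext i k
    fin_cases i <;> fin_cases k
    · simp [hj]
      rw [show ee^(3*(j:ℕ)) = (ee^(j:ℕ))^3 by ring]
      linear_combination (-A 1 1 * ee^(j:ℕ)) * e5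
    · simp [hq]
    · simp [h10]
    · simp
      rw [show ee^(3*(j:ℕ)) = (ee^(j:ℕ))^3 by ring, show ee^(2*(j:ℕ)) = (ee^(j:ℕ))^2 by ring]
      linear_combination (-A 1 1) * e5

/-- Classification of all matrices preserving `F₃₀`. -/
theorem classify {A : Matrix (Fin 2) (Fin 2) ℂ} (hdet : A.det ≠ 0)
    (h : ∀ v, Fv (A *ᵥ v) = Fv v) :
    ∃ l : ℂ, l ^ 30 = 1 ∧ ∃ m i, ∃ j : Fin 5,
      A = l • ((rep m i * mS ^ (j:ℕ) : Matrix.SpecialLinearGroup (Fin 2) ℂ) :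
        Matrix (Fin 2) (Fin 2) ℂ) := by
  rw [Matrix.det_fin_two] at hdet
  have hf : fv (A 0 0) (A 1 0) = 0 := by
    apply fv_eq_zero (c := A 0 1) (d := A 1 1)
    · intro h0; apply hdet; linear_combination h0
    · intro x y
      have := h ![x, y]
      simpa [Fv, Matrix.mulVec, dotProduct, Fin.sum_univ_two] using this
  obtain ⟨m, i, hmi⟩ := orbit hf
  have hB := inv_mem (rep_mem m i)
  rw [mem_Gam] at hB
  obtain ⟨l, hl, j, hj⟩ := tri
    (A := (((rep m i)⁻¹ : Matrix.SpecialLinearGroup (Fin 2) ℂ) : Matrix (Fin 2) (Fin 2) ℂ) * A) (by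
      rw [Matrix.SpecialLinearGroup.coe_inv, Matrix.adjugate_fin_two]
      simp [Matrix.mul_apply, Fin.sum_univ_two]
      linear_combination hmi) (by
      intro v
      rw [← Matrix.mulVec_mulVec, hB, h])
  refine ⟨l, hl, m, i, j, ?_⟩
  rw [Matrix.SpecialLinearGroup.coe_mul, ← Matrix.mul_smul, ← hj, ← Matrix.mul_assoc,
    ← Matrix.SpecialLinearGroup.coe_mul, mul_inv_cancel, Matrix.SpecialLinearGroup.coe_one, Matrix.one_mul]

theorem neg_mem_Gam {A : Matrix.SpecialLinearGroup (Fin 2) ℂ} (h : A ∈ Gam) : -A ∈ Gam := by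
  rw [mem_Gam] at *
  intro v
  rw [Matrix.SpecialLinearGroup.coe_neg, Matrix.neg_mulVec, ← h v]
  simp only [Fv, Ff, Pi.neg_apply]
  ring

theorem Gam_finite_card : Finite Gam ∧ Nat.card Gam ≤ 120 := by
  let φ : (Option (Fin 5) × Fin 2) × (Fin 2 × Fin 5) → Gam := fun t =>
    ⟨(if t.2.1 = 0 then 1 else -1) * (rep t.1.1 t.1.2 * mS ^ (t.2.2 : ℕ)), by
      refine mul_mem ?_ (mul_mem (rep_mem _ _) (pow_mem mS_mem _))
      split_ifs
      · exact one_mem _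
      · exact neg_mem_Gam (one_mem _)⟩
  have hφ : Function.Surjective φ := by
    rintro ⟨A, hA⟩
    obtain ⟨l, hl, m, i, j, hj⟩ := classify (A := (A : Matrix (Fin 2) (Fin 2) ℂ)) (by simp) hA
    have hd := congrArg Matrix.det hj
    rw [Matrix.det_smul] at hd
    simp only [Matrix.SpecialLinearGroup.det_coe, Fintype.card_fin, mul_one] at hd
    have : l = 1 ∨ l = -1 := by
      have h0 : (l - 1) * (l + 1) = 0 := by linear_combination -hd
      rcases mul_eq_zero.1 h0 with h | h
      · exact Or.inl (by linear_combination h)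
      · exact Or.inr (by linear_combination h)
    rcases this with rfl | rfl
    · refine ⟨((m, i), (0, j)), ?_⟩
      apply Subtype.ext
      apply Subtype.ext
      change ((1 * (rep m i * mS ^ (j : ℕ)) : Matrix.SpecialLinearGroup (Fin 2) ℂ) :
        Matrix (Fin 2) (Fin 2) ℂ) = A
      rw [one_mul, hj, one_smul]
    · refine ⟨((m, i), (1, j)), ?_⟩
      apply Subtype.ext
      apply Subtype.ext
      change (((-1) * (rep m i * mS ^ (j : ℕ)) : Matrix.SpecialLinearGroup (Fin 2) ℂ) :
        Matrix (Fin 2) (Fin 2) ℂ) = A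
      rw [hj, neg_one_mul, Matrix.SpecialLinearGroup.coe_neg, neg_one_smul]
  refine ⟨Finite.of_surjective _ hφ, ?_⟩
  have := Nat.card_le_card_of_surjective φ hφ
  simpa using this

/-! ### The isomorphism of `Gam` with `SL(2, 5)` -/

abbrev SL5 := Matrix.SpecialLinearGroup (Fin 2) (ZMod 5)

instance : Fact (Nat.Prime 5) := ⟨by norm_num⟩

theorem card_quads : Fintype.card
    {t : (ZMod 5 × ZMod 5) × (ZMod 5 × ZMod 5) // t.1.1 * t.2.2 - t.1.2 * t.2.1 = 1} = 120 := by
  decide +kernel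

theorem card_SL5_ge : 120 ≤ Nat.card SL5 := by
  have hc := card_quads
  rw [← Nat.card_eq_fintype_card] at hc
  rw [← hc]
  refine Nat.card_le_card_of_injective (fun t => (⟨!![t.1.1.1, t.1.1.2; t.1.2.1, t.1.2.2], by
    rw [Matrix.det_fin_two_of]; exact t.2⟩ : SL5)) ?_
  rintro ⟨⟨⟨a, b⟩, ⟨c, d⟩⟩, h⟩ ⟨⟨⟨a2, b2⟩, ⟨c2, d2⟩⟩, h3⟩ hh
  have h2 := congrArg Subtype.val hh
  have e1 := congrFun (congrFun h2 0) 0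
  have e2 := congrFun (congrFun h2 0) 1
  have e3 := congrFun (congrFun h2 1) 0
  have e4 := congrFun (congrFun h2 1) 1
  simp at e1 e2 e3 e4
  simp [e1, e2, e3, e4]

/-- Generator. -/
def s5 : SL5 := ⟨!![1, -1; 0, 1], by rw [Matrix.det_fin_two_of]; ring⟩

/-- Generator. -/
def t5 : SL5 := ⟨!![0, -1; 1, 0], by rw [Matrix.det_fin_two_of]; ring⟩

/-- Upper unipotent element. -/
def u5 (x : ZMod 5) : SL5 := ⟨!![1, x; 0, 1], by rw [Matrix.det_fin_two_of]; ring⟩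

/-- Lower unipotent element. -/
def l5 (x : ZMod 5) : SL5 := ⟨!![1, 0; x, 1], by rw [Matrix.det_fin_two_of]; ring⟩

theorem s5_pow (n : ℕ) : s5 ^ n = u5 (-(n : ZMod 5)) := by
  induction n with
  | zero =>
    apply Subtype.ext
    ext i j; fin_cases i <;> fin_cases j <;> simp [u5]
  | succ n ih =>
    rw [pow_succ, ih]
    apply Subtype.ext
    rw [Matrix.SpecialLinearGroup.coe_mul]
    simp only [u5, s5, Matrix.mul_fin_two]
    ext i j; fin_cases i <;> fin_cases j <;> simp

theorem gen5_s6 (H : Subgroup SL5) (hs : s5 ∈ H) (ht : t5 ∈ H) : H = ⊤ := by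
  have hu : ∀ x, u5 x ∈ H := by
    intro x
    have : u5 x = s5 ^ (-x).val := by
      rw [s5_pow, ZMod.natCast_zmod_val, neg_neg]
    rw [this]
    exact pow_mem hs _
  have hl : ∀ x, l5 x ∈ H := by
    intro x
    have : l5 x * t5 = t5 * u5 (-x) := by
      apply Subtype.ext
      rw [Matrix.SpecialLinearGroup.coe_mul, Matrix.SpecialLinearGroup.coe_mul]
      simp only [u5, l5, t5, Matrix.mul_fin_two]
      ext i j; fin_cases i <;> fin_cases j <;> simp
    rw [eq_mul_inv_of_mul_eq this]
    exact mul_mem (mul_mem ht (hu _)) (inv_mem ht)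
  have key : ∀ g : SL5, g.1 1 0 ≠ 0 → g ∈ H := by
    intro g hg
    have hd := g.2
    rw [Matrix.det_fin_two] at hd
    have : g = u5 ((g.1 0 0 - 1) / g.1 1 0) * l5 (g.1 1 0) * u5 ((g.1 1 1 - 1) / g.1 1 0) := by
      apply Subtype.ext
      rw [Matrix.SpecialLinearGroup.coe_mul, Matrix.SpecialLinearGroup.coe_mul]
      simp only [u5, l5, Matrix.mul_fin_two]
      ext i j; fin_cases i <;> fin_cases j
      · simp; field_simp; ring
      · simp; field_simp; linear_combination -hd
      · simp
      · simp; field_simp; ring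
    rw [this]
    exact mul_mem (mul_mem (hu _) (hl _)) (hu _)
  rw [eq_top_iff]
  intro g _
  by_cases hg : g.1 1 0 = 0
  · have hd := g.2
    rw [Matrix.det_fin_two, hg] at hd
    have h0 : g.1 0 0 ≠ 0 := by
      intro h0; rw [h0] at hd; simp at hd
    have h1 : t5 * g ∈ H := by
      apply key
      rw [Matrix.SpecialLinearGroup.coe_mul]
      simpa [t5, Matrix.mul_apply, Fin.sum_univ_two] using h0
    exact (Subgroup.mul_mem_cancel_left H ht).1 h1
  · exact key g hg

/-- The ring of integers of the fifth cyclotomic field. -/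
abbrev RR := AdjoinRoot (Polynomial.cyclotomic 5 ℤ)

/-- Generic fifth root of unity. -/
def rt : RR := AdjoinRoot.root _

/-- The complex embedding. -/
def toC : RR →+* ℂ := AdjoinRoot.lift (Int.castRingHom ℂ) ee (by
  rw [← Polynomial.eval_map, Polynomial.map_cyclotomic]
  exact (Polynomial.isRoot_cyclotomic_iff).2 ee_prim)

theorem cyc5 (R : Type*) [CommRing R] : Polynomial.cyclotomic 5 R =
    Polynomial.X^4 + Polynomial.X^3 + Polynomial.X^2 + Polynomial.X + 1 := by
  rw [Polynomial.cyclotomic_prime]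
  simp only [Finset.sum_range_succ, Finset.sum_range_zero]
  ring

/-- Reduction modulo the prime above five. -/
def to5 : RR →+* ZMod 5 := AdjoinRoot.lift (Int.castRingHom (ZMod 5)) 1 (by
  rw [cyc5]
  simp
  decide)

theorem toC_rt : toC rt = ee := AdjoinRoot.lift_root _
theorem to5_rt : to5 rt = 1 := AdjoinRoot.lift_root _

theorem toC_inj : Function.Injective toC := by
  rw [injective_iff_map_eq_zero]
  intro a
  induction a using AdjoinRoot.induction_on with
  | ih p =>
    intro h
    unfold toC at h
    rw [AdjoinRoot.lift_mk] at h
    rw [AdjoinRoot.mk_eq_zero, Polynomial.cyclotomic_eq_minpoly ee_prim (by norm_num)]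
    exact minpoly.isIntegrallyClosed_dvd (ee_prim.isIntegral (by norm_num)) (by
      rw [Polynomial.aeval_def]; exact h)

theorem rt_five : rt ^ 5 = 1 := by
  apply toC_inj
  rw [map_pow, toC_rt, ee_five, map_one]

/-- Integral model of `mS`. -/
def sR : Matrix.SpecialLinearGroup (Fin 2) RR := ⟨!![rt^3, -1; 0, rt^2], by
  rw [Matrix.det_fin_two_of]
  linear_combination rt_five⟩

/-- Integral model of `mT`. -/
def tR : Matrix.SpecialLinearGroup (Fin 2) RR := ⟨!![0, -1; 1, 0], by
  rw [Matrix.det_fin_two_of]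
  ring⟩

theorem mapC_s : ((Matrix.SpecialLinearGroup.map toC sR : Matrix.SpecialLinearGroup (Fin 2) ℂ) :
    Matrix (Fin 2) (Fin 2) ℂ) = !![ee^3, -1; 0, ee^2] := by
  change (!![rt^3, -1; 0, rt^2] : Matrix (Fin 2) (Fin 2) RR).map toC = _
  ext i j; fin_cases i <;> fin_cases j <;> simp [toC_rt]

theorem mapC_t : ((Matrix.SpecialLinearGroup.map toC tR : Matrix.SpecialLinearGroup (Fin 2) ℂ) :
    Matrix (Fin 2) (Fin 2) ℂ) = !![0, -1; 1, 0] := by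
  change (!![0, -1; 1, 0] : Matrix (Fin 2) (Fin 2) RR).map toC = _
  ext i j; fin_cases i <;> fin_cases j <;> simp

theorem exists_conj : ∃ P : Matrix.SpecialLinearGroup (Fin 2) ℂ,
    P * Matrix.SpecialLinearGroup.map toC sR = mS * P ∧
    P * Matrix.SpecialLinearGroup.map toC tR = mT * P := by
  obtain ⟨z, hz⟩ := IsAlgClosed.exists_pow_nat_eq (qq⁻¹) (n := 2) (by norm_num)
  have hz' : z ^ 2 * qq = 1 := by rw [hz]; exact inv_mul_cancel₀ qq_ne
  obtain ⟨P, hP⟩ : ∃ P : Matrix.SpecialLinearGroup (Fin 2) ℂ,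
      (P : Matrix (Fin 2) (Fin 2) ℂ) = !![z, -z*pp; 0, z*qq] :=
    ⟨⟨!![z, -z*pp; 0, z*qq], by rw [Matrix.det_fin_two_of]; linear_combination hz'⟩, rfl⟩
  refine ⟨P, ?_, ?_⟩
  · apply Subtype.ext
    rw [Matrix.SpecialLinearGroup.coe_mul, Matrix.SpecialLinearGroup.coe_mul, hP, mapC_s]
    simp only [mS, Matrix.mul_fin_two]
    ext i j; fin_cases i <;> fin_cases j
    · simp; ring
    · simp [pp]
      linear_combination (z * ((-ee^3 + 5 * ee - 5) / 5)) * ee_sum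
    · simp
    · simp; ring
  · apply Subtype.ext
    rw [Matrix.SpecialLinearGroup.coe_mul, Matrix.SpecialLinearGroup.coe_mul, hP, mapC_t]
    simp only [mT, Matrix.mul_fin_two]
    ext i j; fin_cases i <;> fin_cases j
    · simp; ring
    · simp
      linear_combination (-z) * pq_det
    · simp; ring
    · simp; ring

theorem map5_s : Matrix.SpecialLinearGroup.map to5 sR = s5 := by
  apply Subtype.ext
  change (!![rt^3, -1; 0, rt^2] : Matrix (Fin 2) (Fin 2) RR).map to5 = _
  ext i j; fin_cases i <;> fin_cases j <;> simp [s5, to5_rt]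

theorem map5_t : Matrix.SpecialLinearGroup.map to5 tR = t5 := by
  apply Subtype.ext
  change (!![0, -1; 1, 0] : Matrix (Fin 2) (Fin 2) RR).map to5 = _
  ext i j; fin_cases i <;> fin_cases j <;> simp [t5]

theorem Gam_iso : Nat.card SL5 = 120 ∧ Nonempty (Gam ≃* SL5) := by
  obtain ⟨P, hP1, hP2⟩ := exists_conj
  let α : Matrix.SpecialLinearGroup (Fin 2) RR →* Matrix.SpecialLinearGroup (Fin 2) ℂ :=
    (MulAut.conj P).toMonoidHom.comp (Matrix.SpecialLinearGroup.map toC)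
  have hα : Function.Injective α := by
    intro x y h
    have h1 : Matrix.SpecialLinearGroup.map toC x = Matrix.SpecialLinearGroup.map toC y :=
      (MulAut.conj P).injective h
    apply Subtype.ext
    ext i j
    apply toC_inj
    have := congrFun (congrFun (congrArg Subtype.val h1) i) j
    simpa using this
  have hs : α sR = mS := by
    change P * _ * P⁻¹ = _
    rw [hP1, mul_inv_cancel_right]
  have ht : α tR = mT := by
    change P * _ * P⁻¹ = _
    rw [hP2, mul_inv_cancel_right]
  let K := Gam.comap α
  let a : K →* Gam := α.subgroupComap Gam
  have ha : Function.Injective a := by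
    intro x y h
    apply Subtype.ext
    apply hα
    exact congrArg Subtype.val h
  let b : K →* SL5 := (Matrix.SpecialLinearGroup.map to5).comp K.subtype
  have hb : Function.Surjective b := by
    rw [← MonoidHom.range_eq_top]
    apply gen5_s6
    · refine ⟨⟨sR, ?_⟩, map5_s⟩
      change α sR ∈ Gam
      rw [hs]; exact mS_mem
    · refine ⟨⟨tR, ?_⟩, map5_t⟩
      change α tR ∈ Gam
      rw [ht]; exact mT_mem
  obtain ⟨hfin, hcard⟩ := Gam_finite_card
  have hKfin : Finite K := Finite.of_injective a ha
  have h1 := Nat.card_le_card_of_injective a ha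
  have h2 := Nat.card_le_card_of_surjective b hb
  have h3 := card_SL5_ge
  have hab : Function.Bijective a := (Nat.bijective_iff_injective_and_card a).2 ⟨ha, by omega⟩
  have hbb : Function.Bijective b := (Nat.bijective_iff_surjective_and_card b).2 ⟨hb, by omega⟩
  exact ⟨by omega, ⟨(MulEquiv.ofBijective a hab).symm.trans (MulEquiv.ofBijective b hbb)⟩⟩

/-! ### Reduction of the three-dimensional problem -/

/-- The form `G = Z³⁰ + F₃₀(X, Y)` on vectors. -/
def Gv (v : Fin 3 → ℂ) : ℂ := v 2 ^ 30 + Ff (v 0) (v 1)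

theorem eval_G30 (v : Fin 3 → ℂ) : eval v G30 = Gv v := by
  simp [G30, Gv, Ff]

theorem Gv_smul (t : ℂ) (v : Fin 3 → ℂ) : Gv (t • v) = t ^ 30 * Gv v := by
  simp only [Gv, Pi.smul_apply, smul_eq_mul, Ff]
  ring

theorem interp (p : Polynomial ℂ) (hdeg : p.natDegree ≤ 30) {F : ℂ} (hF : F ≠ 0)
    (hroot : ∀ t, 1 + F * t ^ 30 = 0 → p.eval t = 0) (h0 : p.eval 0 = 0) : p = 0 := by
  classical
  have hne : -1 / F ≠ 0 := div_ne_zero (by norm_num) hF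
  have hprim : IsPrimitiveRoot (Complex.exp (2 * Real.pi * Complex.I / (30 : ℕ))) 30 :=
    Complex.isPrimitiveRoot_exp 30 (by norm_num)
  have hcard : (Polynomial.nthRoots 30 (-1 / F)).toFinset.card = 30 := by
    rw [Multiset.toFinset_card_of_nodup (hprim.nthRoots_nodup hne), hprim.card_nthRoots,
      if_pos (IsAlgClosed.exists_pow_nat_eq _ (by norm_num))]
  have hnot : (0 : ℂ) ∉ (Polynomial.nthRoots 30 (-1 / F)).toFinset := by
    rw [Multiset.mem_toFinset, Polynomial.mem_nthRoots (by norm_num)]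
    intro h
    apply hne
    rw [← h]; norm_num
  refine Polynomial.eq_zero_of_natDegree_lt_card_of_eval_eq_zero' p
    (insert 0 (Polynomial.nthRoots 30 (-1 / F)).toFinset) ?_ ?_
  · intro t ht
    rw [Finset.mem_insert, Multiset.mem_toFinset, Polynomial.mem_nthRoots (by norm_num)] at ht
    rcases ht with rfl | ht
    · exact h0
    · apply hroot
      rw [ht]; field_simp; norm_num
  · rw [Finset.card_insert_of_notMem hnot, hcard]
    omega

theorem natDegree_gF_le {p q : Polynomial ℂ} (hp : p.natDegree ≤ 1) (hq : q.natDegree ≤ 1) :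
    (gF p q).natDegree ≤ 30 := by
  unfold gF
  compute_degree
  all_goals omega

theorem step1_aux (g : Matrix (Fin 3) (Fin 3) ℂ)
    (h : ∀ v, Gv v = 0 → Gv (g *ᵥ v) = 0) (x y : ℂ) (hF : Ff x y ≠ 0) :
    Gv (g *ᵥ ![x, y, 1]) = Gv (g *ᵥ ![0, 0, 1]) * Gv ![x, y, 1] := by
  set c := Gv (g *ᵥ ![0, 0, 1]) with hc
  let w : Fin 3 → Polynomial ℂ := fun i =>
    Polynomial.C (g i 0 * x + g i 1 * y) * Polynomial.X + Polynomial.C (g i 2)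
  have hw : ∀ i, (w i).natDegree ≤ 1 := fun i => Polynomial.natDegree_linear_le
  have hev : ∀ t, Polynomial.eval t (w 2 ^ 30 + gF (w 0) (w 1)) =
      Gv (g *ᵥ ![t * x, t * y, 1]) := by
    intro t
    rw [Polynomial.eval_add, eval_gF, Polynomial.eval_pow]
    simp only [Gv, w, Matrix.mulVec, dotProduct, Fin.sum_univ_three, Polynomial.eval_add,
      Polynomial.eval_mul, Polynomial.eval_C, Polynomial.eval_X]
    simp only [Matrix.cons_val_zero, Matrix.cons_val_one, Matrix.cons_val]
    congr 2 <;> ring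
  have hGt : ∀ t, Gv ![t * x, t * y, 1] = 1 + Ff x y * t ^ 30 := by
    intro t
    simp only [Gv, Matrix.cons_val_zero, Matrix.cons_val_one, Matrix.cons_val, Ff_smul]
    ring
  have hz := interp (w 2 ^ 30 + gF (w 0) (w 1) -
    Polynomial.C c * (1 + Polynomial.C (Ff x y) * Polynomial.X ^ 30)) (by
      refine (Polynomial.natDegree_sub_le_of_le (n := 30) (m := 30) ?_ ?_).trans (by norm_num)
      · refine Polynomial.natDegree_add_le_of_degree_le ?_ (natDegree_gF_le (hw 0) (hw 1))
        exact (Polynomial.natDegree_pow_le_of_le 30 (hw 2)).trans (by norm_num)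
      · compute_degree) hF (by
      intro t ht
      rw [Polynomial.eval_sub, hev, h _ (by rw [hGt, ht])]
      simp [ht]) (by
      rw [Polynomial.eval_sub, hev]
      simp [hc])
  have h1 := congrArg (Polynomial.eval 1) hz
  rw [Polynomial.eval_sub, hev] at h1
  have h2 := hGt 1
  simp only [one_mul, one_pow, mul_one] at h1 h2
  rw [h2]
  simp at h1
  linear_combination h1

theorem step1 (g : Matrix (Fin 3) (Fin 3) ℂ)
    (h : ∀ v, Gv v = 0 → Gv (g *ᵥ v) = 0) :
    ∀ v, Gv (g *ᵥ v) = Gv (g *ᵥ ![0, 0, 1]) * Gv v := by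
  set c := Gv (g *ᵥ ![0, 0, 1]) with hc
  have hgen : ∀ v : Fin 3 → ℂ, v 2 ≠ 0 → Ff (v 0) (v 1) ≠ 0 → Gv (g *ᵥ v) = c * Gv v := by
    intro v h2 hF
    have hv : v = v 2 • ![(v 2)⁻¹ * v 0, (v 2)⁻¹ * v 1, 1] := by
      ext i; fin_cases i <;> simp [h2]
    have := step1_aux g h ((v 2)⁻¹ * v 0) ((v 2)⁻¹ * v 1) (by
      rw [Ff_smul]
      exact mul_ne_zero (pow_ne_zero _ (inv_ne_zero h2)) hF)
    calc Gv (g *ᵥ v) = Gv (g *ᵥ (v 2 • ![(v 2)⁻¹ * v 0, (v 2)⁻¹ * v 1, 1])) :=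
          congrArg (fun w => Gv (g *ᵥ w)) hv
      _ = c * Gv (v 2 • ![(v 2)⁻¹ * v 0, (v 2)⁻¹ * v 1, 1]) := by
          rw [Matrix.mulVec_smul, Gv_smul, Gv_smul, this]
          ring
      _ = c * Gv v := congrArg (fun w => c * Gv w) hv.symm
  let Q : MvPolynomial (Fin 3) ℂ :=
    bind₁ (fun i => C (g i 0) * X 0 + C (g i 1) * X 1 + C (g i 2) * X 2) G30 - C c * G30
  let FP : MvPolynomial (Fin 3) ℂ := G30 - X 2 ^ 30
  have hQ : ∀ v, eval v Q = Gv (g *ᵥ v) - c * Gv v := by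
    intro v
    simp only [Q, map_sub, map_mul, eval_C, eval_G30]
    have b1 : ∀ f : Fin 3 → MvPolynomial (Fin 3) ℂ, bind₁ f 522 = 522 :=
      fun f => map_ofNat (bind₁ f) 522
    have b2 : ∀ f : Fin 3 → MvPolynomial (Fin 3) ℂ, bind₁ f 10005 = 10005 :=
      fun f => map_ofNat (bind₁ f) 10005
    simp [G30, Gv, Ff, Matrix.mulVec, dotProduct, Fin.sum_univ_three, b1, b2]
  have hFP : ∀ v, eval v FP = Ff (v 0) (v 1) := by
    intro v
    simp only [FP, map_sub, eval_G30, map_pow, eval_X, Gv]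
    ring
  have hz : Q * (X 2 * FP) = 0 := by
    apply MvPolynomial.funext
    intro v
    rw [map_mul, map_mul, hQ, hFP, eval_X, map_zero]
    by_cases h2 : v 2 = 0
    · simp [h2]
    by_cases hF : Ff (v 0) (v 1) = 0
    · simp [hF]
    rw [hgen v h2 hF]; ring
  have hFP0 : FP ≠ 0 := by
    intro h0
    have := hFP ![1, 0, 0]
    rw [h0] at this
    simp [Ff] at this
  have hQ0 : Q = 0 := by
    rcases mul_eq_zero.1 hz with h | h
    · exact h
    · exact absurd h (mul_ne_zero (X_ne_zero _) hFP0)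
  intro v
  have := hQ v
  rw [hQ0, map_zero] at this
  linear_combination -this

theorem binom_aux {P Q a b n : ℂ} (hn : n ≠ 0)
    (h : ∀ z, P + Q * z ^ 29 = n * (a + b * z) ^ 29) : a * b = 0 := by
  have hp : Polynomial.C P + Polynomial.C Q * Polynomial.X ^ 29 =
      Polynomial.C n * (Polynomial.C a + Polynomial.C b * Polynomial.X) ^ 29 := by
    apply Polynomial.funext
    intro z
    simpa using h z
  have h1 := congrArg (fun p => Polynomial.eval 0 (Polynomial.derivative p)) hp
  simp [Polynomial.derivative_pow, hn] at h1
  rcases h1 with h1 | h1 <;> simp [h1]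

theorem binom_aux2 {a b α β n : ℂ} (hn : n ≠ 0)
    (h : ∀ z, a * gFx 1 z + b * gFy 1 z = n * (α + β * z) ^ 29) : α * β = 0 := by
  have hp : Polynomial.C a * gFx 1 Polynomial.X + Polynomial.C b * gFy 1 Polynomial.X =
      Polynomial.C n * (Polynomial.C α + Polynomial.C β * Polynomial.X) ^ 29 := by
    apply Polynomial.funext
    intro z
    simpa [gFx, gFy] using h z
  have h1 := congrArg (fun p => Polynomial.eval 0 (Polynomial.derivative p)) hp
  simp [Polynomial.derivative_pow, hn, gFx, gFy] at h1
  rcases h1 with h1 | h1 <;> simp [h1]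

theorem step2 (g h : Matrix (Fin 3) (Fin 3) ℂ) (hgh : g * h = 1) (hhg : h * g = 1) {c : ℂ}
    (hc : c ≠ 0) (H : ∀ v, Gv (g *ᵥ v) = c * Gv v) :
    g 0 2 = 0 ∧ g 1 2 = 0 ∧ g 2 0 = 0 ∧ g 2 1 = 0 := by
  have E : ∀ u : Fin 3 → ℂ, g 0 2 * gFx (u 0) (u 1) + g 1 2 * gFy (u 0) (u 1)
      + 30 * g 2 2 * u 2 ^ 29 = 30 * c * (h 2 0 * u 0 + h 2 1 * u 1 + h 2 2 * u 2) ^ 29 := by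
    intro u
    have hv : g *ᵥ (h *ᵥ u) = u := by rw [Matrix.mulVec_mulVec, hgh, Matrix.one_mulVec]
    set v := h *ᵥ u with hvdef
    have hv2 : v 2 = h 2 0 * u 0 + h 2 1 * u 1 + h 2 2 * u 2 := by
      simp [hvdef, Matrix.mulVec, dotProduct, Fin.sum_univ_three]
    have hpoly : gF (Polynomial.C (u 0) + Polynomial.C (g 0 2) * Polynomial.X)
        (Polynomial.C (u 1) + Polynomial.C (g 1 2) * Polynomial.X)
        + (Polynomial.C (u 2) + Polynomial.C (g 2 2) * Polynomial.X) ^ 30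
        = Polynomial.C c * (Polynomial.C (Ff (v 0) (v 1))
          + (Polynomial.C (v 2) + Polynomial.X) ^ 30) := by
      apply Polynomial.funext
      intro t
      rw [Polynomial.eval_add, eval_gF]
      have h1 := H (v + t • ![0, 0, 1])
      rw [Matrix.mulVec_add, hv, Matrix.mulVec_smul] at h1
      simp [Gv, Matrix.mulVec, dotProduct, Fin.sum_univ_three] at h1
      simp
      rw [mul_comm (g 0 2), mul_comm (g 1 2), mul_comm (g 2 2)]
      linear_combination h1
    have h1 := congrArg (fun p => Polynomial.eval 0 (Polynomial.derivative p)) hpoly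
    simp only [Polynomial.derivative_add, deriv_gF] at h1
    simp [Polynomial.derivative_pow, gD1, gFx, gFy] at h1
    rw [← hv2]
    simp only [gFx, gFy]
    linear_combination h1
  have hc30 : 30 * c ≠ 0 := mul_ne_zero (by norm_num) hc
  have E1 : ∀ z, 30 * g 0 2 + 30 * g 2 2 * z ^ 29 = 30 * c * (h 2 0 + h 2 2 * z) ^ 29 := by
    intro z
    have := E ![1, 0, z]
    simp [gFx, gFy] at this
    linear_combination this
  have E2 : ∀ z, 30 * g 1 2 + 30 * g 2 2 * z ^ 29 = 30 * c * (h 2 1 + h 2 2 * z) ^ 29 := by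
    intro z
    have := E ![0, 1, z]
    simp [gFx, gFy] at this
    linear_combination this
  have E3 : ∀ z, g 0 2 * gFx 1 z + g 1 2 * gFy 1 z = 30 * c * (h 2 0 + h 2 1 * z) ^ 29 := by
    intro z
    have := E ![1, z, 0]
    simp at this
    linear_combination this
  have a1 := binom_aux hc30 E1
  have a2 := binom_aux hc30 E2
  have a3 := binom_aux2 hc30 E3
  have hid : ∀ j, h 2 0 * g 0 j + h 2 1 * g 1 j + h 2 2 * g 2 j = (1 : Matrix (Fin 3) (Fin 3) ℂ) 2 j := by
    intro j
    rw [← hhg, Matrix.mul_apply, Fin.sum_univ_three]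
  have hγ : h 2 2 ≠ 0 := by
    intro hγ
    rw [hγ] at E1 E2
    have d1 := E1 0
    have d2 := E2 0
    simp at d1 d2
    have f := E3 1
    have hi := hid 2
    simp [hγ] at hi
    rcases mul_eq_zero.1 a3 with h0 | h0
    · simp [h0] at d1
      simp [h0, d1] at f hi
      have : g 1 2 = 0 := by
        rw [← d2] at f
        simp only [gFy] at f
        linear_combination (-1/310590) * f
      simp [this] at hi
    · simp [h0] at d2
      simp [h0, d2] at f hi
      have : g 0 2 = 0 := by
        rw [← d1] at f
        simp only [gFx] at f
        linear_combination (-1/289710) * f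
      simp [this] at hi
  have hα : h 2 0 = 0 := (mul_eq_zero.1 a1).resolve_right hγ
  have hβ : h 2 1 = 0 := (mul_eq_zero.1 a2).resolve_right hγ
  refine ⟨?_, ?_, ?_, ?_⟩
  · have := E1 0
    simpa [hα] using this
  · have := E2 0
    simpa [hβ] using this
  · have := hid 0
    simpa [hα, hβ, hγ] using this
  · have := hid 1
    simpa [hα, hβ, hγ] using this

/-! ### Assembly -/

/-- Block embedding. -/
def emb (A : Matrix (Fin 2) (Fin 2) ℂ) : Matrix (Fin 3) (Fin 3) ℂ :=
  !![A 0 0, A 0 1, 0; A 1 0, A 1 1, 0; 0, 0, 1]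

theorem emb_one : emb 1 = 1 := by
  ext i j; fin_cases i <;> fin_cases j <;> simp [emb]

theorem emb_mul (A B : Matrix (Fin 2) (Fin 2) ℂ) : emb (A * B) = emb A * emb B := by
  ext i j; fin_cases i <;> fin_cases j <;>
    simp [emb, Matrix.mul_apply, Fin.sum_univ_two, Fin.sum_univ_three]

theorem emb_inj {A B : Matrix (Fin 2) (Fin 2) ℂ} (h : emb A = emb B) : A = B := by
  ext i j
  have h00 := congrFun (congrFun h 0) 0
  have h01 := congrFun (congrFun h 0) 1
  have h10 := congrFun (congrFun h 1) 0
  have h11 := congrFun (congrFun h 1) 1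
  simp [emb] at h00 h01 h10 h11
  fin_cases i <;> fin_cases j <;> simpa

theorem Gv_emb {A : Matrix (Fin 2) (Fin 2) ℂ} (h : ∀ v, Fv (A *ᵥ v) = Fv v) (v : Fin 3 → ℂ) :
    Gv (emb A *ᵥ v) = Gv v := by
  have := h ![v 0, v 1]
  simp [Fv, Matrix.mulVec, dotProduct, Fin.sum_univ_two] at this
  simp [Gv, emb, Matrix.mulVec, dotProduct, Fin.sum_univ_three, this]

theorem Fv_smul (t : ℂ) (v : Fin 2 → ℂ) : Fv (t • v) = t ^ 30 * Fv v := by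
  simp [Fv, Ff_smul]

theorem preserves_of (g : GL (Fin 3) ℂ)
    (h : ∀ v, Gv ((g : Matrix (Fin 3) (Fin 3) ℂ) *ᵥ v) = Gv v) : Preserves G30 g := by
  unfold Preserves
  ext w
  simp only [Set.mem_image, Set.mem_ofPred_eq, eval_G30]
  constructor
  · rintro ⟨v, hv, rfl⟩
    rw [h, hv]
  · intro hw
    have e : (g : Matrix (Fin 3) (Fin 3) ℂ) *ᵥ
        (((g⁻¹ : GL (Fin 3) ℂ) : Matrix (Fin 3) (Fin 3) ℂ) *ᵥ w) = w := by
      rw [Matrix.mulVec_mulVec, ← Units.val_mul, mul_inv_cancel, Units.val_one, Matrix.one_mulVec]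
    exact ⟨_, by rw [← h, e, hw], e⟩

/-- The matrix attached to a root of unity and an element of `Gam`. -/
def psi0 : rootsOfUnity 15 ℂ × Gam →* Matrix (Fin 3) (Fin 3) ℂ where
  toFun t := emb (((t.1 : ℂˣ) : ℂ) • ((t.2 : Matrix.SpecialLinearGroup (Fin 2) ℂ) :
    Matrix (Fin 2) (Fin 2) ℂ))
  map_one' := by simp [emb_one]
  map_mul' := by
    intro s t
    rw [← emb_mul]
    congr 1
    simp [smul_smul, mul_comm]

/-- The projective representation. -/
def psi : rootsOfUnity 15 ℂ × Gam →* PGL3 :=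
  (QuotientGroup.mk' scalarSub).comp psi0.toHomUnits

theorem psi0_val (t : rootsOfUnity 15 ℂ × Gam) :
    ((psi0.toHomUnits t : GL (Fin 3) ℂ) : Matrix (Fin 3) (Fin 3) ℂ) =
    emb (((t.1 : ℂˣ) : ℂ) • ((t.2 : Matrix.SpecialLinearGroup (Fin 2) ℂ) :
    Matrix (Fin 2) (Fin 2) ℂ)) := rfl

theorem root15 (u : rootsOfUnity 15 ℂ) : (((u : ℂˣ) : ℂ)) ^ 15 = 1 := by
  have := u.2
  rw [mem_rootsOfUnity] at this
  rw [← Units.val_pow_eq_pow_val, this, Units.val_one]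

theorem scalar_entry (c : ℂˣ) (i j : Fin 3) :
    ((Units.map (algebraMap ℂ (Matrix (Fin 3) (Fin 3) ℂ)).toMonoidHom c : GL (Fin 3) ℂ) :
      Matrix (Fin 3) (Fin 3) ℂ) i j = if i = j then (c : ℂ) else 0 := by
  change (algebraMap ℂ (Matrix (Fin 3) (Fin 3) ℂ) (c : ℂ)) i j = _
  rw [Matrix.algebraMap_matrix_apply]
  rfl

theorem psi_inj : Function.Injective psi := by
  rw [injective_iff_map_eq_one]
  rintro ⟨u, B⟩ h
  have h1 : psi0.toHomUnits (u, B) ∈ scalarSub := by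
    rw [← QuotientGroup.eq_one_iff]; exact h
  obtain ⟨c, hc⟩ := h1
  have hent : ∀ i j, emb (((u : ℂˣ) : ℂ) • ((B : Matrix.SpecialLinearGroup (Fin 2) ℂ) :
    Matrix (Fin 2) (Fin 2) ℂ)) i j = if i = j then (c : ℂ) else 0 := by
    intro i j
    rw [← scalar_entry, hc]; rfl
  have hc1 : (c : ℂ) = 1 := by
    have := hent 2 2
    simp [emb] at this
    exact this.symm
  have hB : ((u : ℂˣ) : ℂ) • ((B : Matrix.SpecialLinearGroup (Fin 2) ℂ) :
      Matrix (Fin 2) (Fin 2) ℂ) = 1 := by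
    apply emb_inj
    rw [emb_one]
    ext i j
    rw [hent, hc1, Matrix.one_apply]
  have hd := congrArg Matrix.det hB
  rw [Matrix.det_smul, Matrix.det_one, Matrix.SpecialLinearGroup.det_coe] at hd
  simp only [Fintype.card_fin, mul_one] at hd
  have hu : ((u : ℂˣ) : ℂ) = 1 := by
    have h15 := root15 u
    generalize ((u : ℂˣ) : ℂ) = z at h15 hd
    have h14 : z ^ 15 = (z ^ 2) ^ 7 * z := by ring
    rw [hd, h15] at h14
    simpa using h14.symm
  rw [hu, one_smul] at hB
  refine Prod.ext ?_ ?_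
  · exact Subtype.ext (Units.ext hu)
  · exact Subtype.ext (Subtype.ext hB)

theorem psi_mem (t : rootsOfUnity 15 ℂ × Gam) : psi t ∈ Lin G30 := by
  refine ⟨psi0.toHomUnits t, ?_, rfl⟩
  apply preserves_of
  intro v
  rw [psi0_val]
  apply Gv_emb
  intro w
  rw [Matrix.smul_mulVec, Fv_smul, t.2.2, show (30 : ℕ) = 15 * 2 from rfl, pow_mul, root15]
  simp

theorem psi_surj (p : PGL3) (hp : p ∈ Lin G30) : ∃ t, psi t = p := by
  obtain ⟨g, hg, rfl⟩ := hp
  have hg' : Preserves G30 g := hg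
  unfold Preserves at hg'
  set M : Matrix (Fin 3) (Fin 3) ℂ := (g : Matrix (Fin 3) (Fin 3) ℂ) with hM
  set N : Matrix (Fin 3) (Fin 3) ℂ := ((g⁻¹ : GL (Fin 3) ℂ) : Matrix (Fin 3) (Fin 3) ℂ) with hN
  have hMN : M * N = 1 := by rw [hM, hN, ← Units.val_mul, mul_inv_cancel, Units.val_one]
  have hNM : N * M = 1 := by rw [hM, hN, ← Units.val_mul, inv_mul_cancel, Units.val_one]
  have hz : ∀ v, Gv v = 0 → Gv (M *ᵥ v) = 0 := by
    intro v hv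
    have : M *ᵥ v ∈ {v : Fin 3 → ℂ | eval v G30 = 0} := by
      rw [← hg']
      exact ⟨v, by simpa [eval_G30] using hv, rfl⟩
    simpa [eval_G30] using this
  have H := step1 M hz
  have hc : Gv (M *ᵥ ![0, 0, 1]) ≠ 0 := by
    intro h0
    have := H (N *ᵥ ![0, 0, 1])
    rw [Matrix.mulVec_mulVec, hMN, h0, Matrix.one_mulVec] at this
    simp [Gv, Ff] at this
  obtain ⟨h02, h12, h20, h21⟩ := step2 M N hMN hNM hc H
  set c := Gv (M *ᵥ ![0, 0, 1]) with hcdef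
  have hcd : c = M 2 2 ^ 30 := by
    rw [hcdef]
    simp [Gv, Ff, Matrix.mulVec, dotProduct, Fin.sum_univ_three, h02, h12]
  have hd : M 2 2 ≠ 0 := by
    intro h0; rw [h0] at hcd; apply hc; rw [hcd]; norm_num
  let A : Matrix (Fin 2) (Fin 2) ℂ := !![M 0 0, M 0 1; M 1 0, M 1 1]
  have hA : ∀ v, Fv (A *ᵥ v) = M 2 2 ^ 30 * Fv v := by
    intro v
    have := H ![v 0, v 1, 0]
    rw [hcd] at this
    simp [Gv, Matrix.mulVec, dotProduct, Fin.sum_univ_three, h20, h21] at this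
    simp [Fv, A, Matrix.mulVec, dotProduct, Fin.sum_univ_two, this]
  have hdetM : M.det ≠ 0 := by
    intro h0
    have := congrArg Matrix.det hMN
    rw [Matrix.det_mul, h0, Matrix.det_one] at this
    simp at this
  have hdetA : A.det ≠ 0 := by
    intro h0
    apply hdetM
    rw [Matrix.det_fin_two_of] at h0
    rw [Matrix.det_fin_three, h02, h12, h20, h21]
    linear_combination M 2 2 * h0
  obtain ⟨l, hl, m, i, j, hj⟩ := classify (A := (M 2 2)⁻¹ • A) (by
      rw [Matrix.det_smul]
      exact mul_ne_zero (pow_ne_zero _ (inv_ne_zero hd)) hdetA) (by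
      intro v
      rw [Matrix.smul_mulVec, Fv_smul, hA]
      field_simp)
  have hB : rep m i * mS ^ (j : ℕ) ∈ Gam := mul_mem (rep_mem _ _) (pow_mem mS_mem _)
  generalize rep m i * mS ^ (j : ℕ) = B at hB hj
  obtain ⟨u, B2, hB2, hu, hj'⟩ : ∃ u : ℂ, ∃ B2 : Matrix.SpecialLinearGroup (Fin 2) ℂ, B2 ∈ Gam ∧
      u ^ 15 = 1 ∧ (M 2 2)⁻¹ • A = u • (B2 : Matrix (Fin 2) (Fin 2) ℂ) := by
    have h0 : (l ^ 15 - 1) * (l ^ 15 + 1) = 0 := by linear_combination hl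
    rcases mul_eq_zero.1 h0 with h | h
    · exact ⟨l, B, hB, by linear_combination h, hj⟩
    · refine ⟨-l, -B, neg_mem_Gam hB, by linear_combination -h, ?_⟩
      rw [hj, Matrix.SpecialLinearGroup.coe_neg, neg_smul_neg]
  have hu0 : u ≠ 0 := by
    intro h0; rw [h0] at hu; norm_num at hu
  refine ⟨(⟨Units.mk0 u hu0, ?_⟩, ⟨B2, hB2⟩), ?_⟩
  · rw [mem_rootsOfUnity]
    apply Units.ext
    simpa using hu
  · change (QuotientGroup.mk (psi0.toHomUnits _) : PGL3) = QuotientGroup.mk g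
    rw [QuotientGroup.eq]
    refine ⟨Units.mk0 (M 2 2) hd, ?_⟩
    rw [eq_inv_mul_iff_mul_eq]
    apply Units.ext
    rw [Units.val_mul, psi0_val]
    change emb (u • (B2 : Matrix (Fin 2) (Fin 2) ℂ)) * _ = M
    rw [← hj']
    ext a b
    rw [Matrix.mul_apply, Fin.sum_univ_three, scalar_entry, scalar_entry, scalar_entry]
    fin_cases a <;> fin_cases b <;> simp [emb, A, h02, h12, h20, h21] <;> field_simp

theorem main_iso : Nonempty (Lin G30 ≃* Multiplicative (ZMod 15) × SL5) := by
  have hr : psi.range = Lin G30 := by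
    ext p
    constructor
    · rintro ⟨t, rfl⟩; exact psi_mem t
    · intro hp; exact psi_surj p hp
  obtain ⟨-, ⟨e1⟩⟩ := Gam_iso
  have hcard : Nat.card (Multiplicative (ZMod 15)) = Nat.card (rootsOfUnity 15 ℂ) := by
    rw [Complex.card_rootsOfUnity 15]
    simp
  have e2 : rootsOfUnity 15 ℂ ≃* Multiplicative (ZMod 15) :=
    mulEquivOfCyclicCardEq hcard.symm
  exact ⟨(MulEquiv.subgroupCongr hr).symm.trans
    ((MonoidHom.ofInjective psi_inj).symm.trans (e2.prodCongr e1))⟩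

theorem stmt6 :
    Nat.card (Lin G30) = 1800 ∧
    Nonempty (Lin G30 ≃*
      Multiplicative (ZMod 15) × Matrix.SpecialLinearGroup (Fin 2) (ZMod 5)) := by
  obtain ⟨e⟩ := main_iso
  refine ⟨?_, ⟨e⟩⟩
  rw [Nat.card_congr e.toEquiv, Nat.card_prod, Gam_iso.1]
  simp
end
end
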